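/- arXiv:1210.2700 — 2 statements merged into one kernel-verified Lean document; each statement's English description precedes it below -/
import Mathlib

section
/- Let α : k → k be a separable field endomorphism, and let K be the direct limit of the directed system k →α k →α ⋯ with structure map β : k → K (the map from the first copy of k). Then the field extension β : k → K is separable. -/
/-- A field homomorphism `β : k → K` is *separable* if every intermediate field that is
finitely generated over `k` is separably generated over `k`, i.e. it admits a transcendence
basis `s` such that the extension over `k(s)` is separable algebraic. -/
def RingHom.IsSeparableFieldHom {k K : Type u} [Field k] [Field K] (β : k →+* K) : Prop :=
  letI : Algebra k K := β.toAlgebra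
  ∀ F : IntermediateField k K, F.FG →
    ∃ s : Set F, AlgebraicIndependent k ((↑) : s → F) ∧
      Algebra.IsSeparable (↥(IntermediateField.adjoin k (s : Set (↥F)))) (↥F)

/-!
By Mac Lane's criterion, an extension `K / k` of exponential characteristic `p` is separable if
and only if elements of `k` that are linearly independent over `kᵖ` stay linearly independent over
`Kᵖ`. In this form separability is visibly transitive, so all composites of the transition maps are
separable; and since a linear relation over `Kᵖ` involves only finitely many elements of `K`, it
already holds at a finite stage of the direct limit.
-/

/-- The family `c` is linearly independent over the `p`-th powers. In a field of exponential
characteristic `p` this is linear independence over the subfield of `p`-th powers; the coefficients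
are written as powers so that no `p`-th roots have to be chosen. -/
def PowIndependent (p : ℕ) {R ι : Type*} [CommSemiring R] [Fintype ι] (c : ι → R) : Prop :=
  ∀ b : ι → R, ∑ j, c j * b j ^ p = 0 → ∀ j, b j = 0

section PowIndependent

variable (p : ℕ) {k ι : Type*} [Field k] [ExpChar k p]

theorem powIndependent_iff_linearIndependent [Fintype ι] {c : ι → k} :
    PowIndependent p c ↔ LinearIndependent (frobenius k p).fieldRange c := by
  have hp : p ≠ 0 := (expChar_pos k p).ne'
  rw [Fintype.linearIndependent_iff]
  constructor
  · intro hc g hg j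
    choose b hb using fun j => RingHom.mem_fieldRange.1 (g j).2
    have hsum : ∑ j, c j * b j ^ p = 0 := by
      simpa [Subfield.smul_def, ← hb, mul_comm, frobenius_def] using hg
    ext
    simp [← hb, hc b hsum j, hp, frobenius_def]
  · intro hc b hb j
    have hpow := hc (fun j => ⟨frobenius k p (b j), b j, rfl⟩) ?_ j
    · exact eq_zero_of_pow_eq_zero (congrArg Subtype.val hpow)
    · simpa [Subfield.smul_def, mul_comm, frobenius_def] using hb

theorem exists_powIndependent_forall_mem_eq_sum (s : Finset k) :
    ∃ (n : ℕ) (c : Fin n → k), PowIndependent p c ∧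
      ∀ a ∈ s, ∃ r : Fin n → k, a = ∑ j, c j * r j ^ p := by
  let V := Submodule.span (frobenius k p).fieldRange (s : Set k)
  have : FiniteDimensional (frobenius k p).fieldRange V :=
    FiniteDimensional.span_finset _ s
  let c := Module.finBasis (frobenius k p).fieldRange V
  refine ⟨_, fun j => c j, (powIndependent_iff_linearIndependent p).2
    (c.linearIndependent.map' V.subtype V.ker_subtype), fun a ha => ?_⟩
  let x : V := ⟨a, Submodule.subset_span ha⟩
  choose r hr using fun j => RingHom.mem_fieldRange.1 (c.repr x j).2
  refine ⟨r, ?_⟩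
  calc
    a = V.subtype (∑ j, c.repr x j • c j) := congrArg V.subtype (c.sum_repr x).symm
    _ = ∑ j, c j * r j ^ p := by
      simp only [map_sum, map_smul, Subfield.smul_def, ← hr, frobenius_def, smul_eq_mul, mul_comm,
        Submodule.subtype_apply]

end PowIndependent

/-- The homomorphism `f : R → S` maps finite families which are linearly independent over the
`p`-th powers to families of the same kind. For fields this is Mac Lane's criterion for
separability: `f(R)` and `Sᵖ` are linearly disjoint over `f(Rᵖ)`. -/
def PreservesPowIndependent (p : ℕ) {R S : Type*} [CommSemiring R] [CommSemiring S]
    (f : R →+* S) : Prop :=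
  ∀ ⦃n : ℕ⦄ (c : Fin n → R), PowIndependent p c → PowIndependent p (f ∘ c)

namespace PreservesPowIndependent

variable {p : ℕ}

section CommSemiring

variable {R S T : Type*} [CommSemiring R] [CommSemiring S] [CommSemiring T]

theorem id : PreservesPowIndependent p (RingHom.id R) :=
  fun _ _ hc => hc

theorem comp {g : S →+* T} {f : R →+* S} (hg : PreservesPowIndependent p g)
    (hf : PreservesPowIndependent p f) : PreservesPowIndependent p (g.comp f) :=
  fun _ c hc => hg (f ∘ c) (hf c hc)

theorem of_injective [Algebra R S] [Algebra R T] (g : S →ₐ[R] T) (hg : Function.Injective g)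
    (hT : PreservesPowIndependent p (algebraMap R T)) :
    PreservesPowIndependent p (algebraMap R S) := by
  intro n c hc b hb j
  have hgb : ∑ j, algebraMap R T (c j) * g (b j) ^ p = 0 := by
    simpa using congrArg g hb
  exact (map_eq_zero_iff g hg).1 (hT c hc (g ∘ b) hgb j)

/-- A relation involves only finitely many elements of `S`, so it already holds in some stage
`T` through which `f` factors. -/
theorem of_forall_exists_factorization {f : R →+* S}
    (h : ∀ (n : ℕ) (b : Fin n → S), ∃ (T : Type*) (_ : CommSemiring T) (g : R →+* T)
      (i : T →+* S), PreservesPowIndependent p g ∧ Function.Injective i ∧ f = i.comp g ∧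
        ∀ j, b j ∈ Set.range i) :
    PreservesPowIndependent p f := by
  intro n c hc b hb j
  obtain ⟨T, _, g, i, hg, hi, rfl, hbi⟩ := h n b
  choose z hz using hbi
  have hsum : ∑ j, g (c j) * z j ^ p = 0 := by
    apply hi
    simpa [hz] using hb
  rw [← hz j, hg c hc z hsum j, map_zero]

end CommSemiring

section CommRing

variable {R A : Type*} [CommRing R] [CommRing A] [Algebra R A]

theorem of_basis_pow [ExpChar R p] [ExpChar A p] {ι : Type*} (b : Module.Basis ι R A)
    (hb : LinearIndependent R fun i => b i ^ p) :
    PreservesPowIndependent p (algebraMap R A) := by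
  intro n c hc y hy j
  let coeffPow (x : A) : ι →₀ R := (b.repr x).mapRange (frobenius R p) (map_zero _)
  have pow_eq (x : A) : Finsupp.linearCombination R (fun i => b i ^ p) (coeffPow x) = x ^ p := by
    conv_rhs => rw [← b.linearCombination_repr x]
    rw [Finsupp.linearCombination_apply, Finsupp.linearCombination_apply,
      Finsupp.sum_mapRange_index (by simp), Finsupp.sum, Finsupp.sum, sum_pow_char]
    simp only [Algebra.smul_def, mul_pow, frobenius_def, map_pow]
  have hcoeff : ∑ j, c j • coeffPow (y j) = 0 := by
    apply hb
    simpa only [map_sum, map_smul, pow_eq, map_zero, Algebra.smul_def, Function.comp_apply] using hy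
  refine b.ext_elem fun i => ?_
  rw [map_zero, Finsupp.zero_apply]
  refine hc (fun j => b.repr (y j) i) ?_ j
  simpa [coeffPow, frobenius_def] using DFunLike.congr_fun hcoeff i

theorem algebraMap_mvPolynomial [ExpChar R p] (σ : Type*) :
    PreservesPowIndependent p (algebraMap R (MvPolynomial σ R)) := by
  refine of_basis_pow (MvPolynomial.basisMonomials σ R) ?_
  have hinj : Function.Injective fun m : σ →₀ ℕ => p • m :=
    nsmul_right_injective (expChar_pos R p).ne'
  simpa [Function.comp_def, MvPolynomial.monomial_pow] using
    (MvPolynomial.basisMonomials σ R).linearIndependent.comp _ hinj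

theorem of_isLocalization (M : Submonoid R) [IsLocalization M A]
    (hM : M ≤ nonZeroDivisors R) : PreservesPowIndependent p (algebraMap R A) := by
  intro n c hc y hy j
  obtain ⟨d, hd⟩ := IsLocalization.exist_integer_multiples_of_finite M y
  choose z hz using hd
  have hsum : ∑ j, c j * z j ^ p = 0 := by
    apply IsLocalization.injective A hM
    simp only [map_sum, map_mul, map_pow, hz, map_zero, Algebra.smul_def, mul_pow,
      mul_left_comm _ (algebraMap R A d ^ p), ← Finset.mul_sum]
    rw [show ∑ j, algebraMap R A (c j) * y j ^ p = 0 from hy, mul_zero]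
  have hdy : algebraMap R A d * y j = 0 := by
    rw [← Algebra.smul_def, ← hz j, hc z hsum j, map_zero]
  exact (IsLocalization.map_units A d).mul_right_eq_zero.1 hdy

end CommRing

section Field

variable {k K : Type*} [Field k] [Field K] [Algebra k K] [ExpChar k p]

theorem of_isSeparable [Algebra.IsSeparable k K] :
    PreservesPowIndependent p (algebraMap k K) := by
  have : ExpChar K p := expChar_of_injective_algebraMap (algebraMap k K).injective p
  let b := Module.Basis.ofVectorSpace k K
  refine of_basis_pow b ?_
  simpa using b.linearIndependent.map_pow_expChar_pow_of_isSeparable p 1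

theorem algebraMap_adjoin {s : Set K} (hs : AlgebraicIndependent k ((↑) : s → K)) :
    PreservesPowIndependent p (algebraMap k (IntermediateField.adjoin k s)) := by
  rw [← Subtype.range_coe (s := s)]
  refine of_injective hs.aevalEquivField.symm.toAlgHom hs.aevalEquivField.symm.injective ?_
  rw [IsScalarTower.algebraMap_eq k (MvPolynomial s k)]
  exact (of_isLocalization _ le_rfl).comp (algebraMap_mvPolynomial s)

theorem of_algebraicIndependent_of_isSeparable {s : Set K}
    (hs : AlgebraicIndependent k ((↑) : s → K))
    [Algebra.IsSeparable (IntermediateField.adjoin k s) K] :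
    PreservesPowIndependent p (algebraMap k K) := by
  have : ExpChar (IntermediateField.adjoin k s) p :=
    expChar_of_injective_algebraMap (algebraMap k _).injective p
  rw [IsScalarTower.algebraMap_eq k (IntermediateField.adjoin k s)]
  exact of_isSeparable.comp (algebraMap_adjoin hs)

/-- Expanding the coefficients of a relation `∑ aᵢ vᵢᵖ = 0` as `aᵢ = ∑ cⱼ rᵢⱼᵖ` turns it into the
relation `∑ cⱼ (∑ rᵢⱼ vᵢ)ᵖ = 0`. -/
theorem linearIndependent_pow (h : PreservesPowIndependent p (algebraMap k K)) {ι : Type*}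
    {v : ι → K} (hv : LinearIndependent k v) : LinearIndependent k fun i => v i ^ p := by
  classical
  have : ExpChar K p := expChar_of_injective_algebraMap (algebraMap k K).injective p
  have hp : p ≠ 0 := (expChar_pos k p).ne'
  rw [linearIndependent_iff'] at hv ⊢
  intro s a ha i hi
  obtain ⟨n, c, hc, hca⟩ := exists_powIndependent_forall_mem_eq_sum p (s.image a)
  choose! r hr using fun i (hi : i ∈ s) => hca (a i) (Finset.mem_image_of_mem a hi)
  have hsum : ∑ j, algebraMap k K (c j) * (∑ i ∈ s, r i j • v i) ^ p = 0 := by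
    calc
      ∑ j, algebraMap k K (c j) * (∑ i ∈ s, r i j • v i) ^ p
        = ∑ i ∈ s, (∑ j, c j * r i j ^ p) • v i ^ p := by
        simp only [sum_pow_char, Finset.mul_sum, Finset.sum_mul, Algebra.smul_def, mul_pow,
          map_sum, map_mul, map_pow, mul_assoc]
        exact Finset.sum_comm
      _ = ∑ i ∈ s, a i • v i ^ p := Finset.sum_congr rfl fun i hi => by rw [← hr i hi]
      _ = 0 := ha
  have hr0 (j) : r i j = 0 := hv s (r · j) (h c hc _ hsum j) i hi
  simp [hr i hi, hr0, hp]

theorem exists_algebraicIndependent_isSeparable [Algebra.EssFiniteType k K]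
    (h : PreservesPowIndependent p (algebraMap k K)) :
    ∃ s : Set K, AlgebraicIndependent k ((↑) : s → K) ∧
      Algebra.IsSeparable (IntermediateField.adjoin k s) K := by
  obtain hp | rfl := expChar_is_prime_or_one k p
  · obtain ⟨s, hs, hsep⟩ :=
      exists_isTranscendenceBasis_and_isSeparable_of_linearIndepOn_pow_of_essFiniteType
        (k := k) (K := K) p hp fun _ hs => h.linearIndependent_pow hs
    exact ⟨s, hs.1, hsep⟩
  · have : CharZero k := charZero_of_expChar_one' k
    obtain ⟨s, hs, hsep⟩ := exists_isTranscendenceBasis_and_isSeparable_of_perfectField k K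
    exact ⟨s, hs.1, hsep⟩

end Field

end PreservesPowIndependent

theorem isSeparableFieldHom_iff_preservesPowIndependent (p : ℕ) {k K : Type u} [Field k] [Field K]
    [ExpChar k p] (β : k →+* K) : β.IsSeparableFieldHom ↔ PreservesPowIndependent p β := by
  let : Algebra k K := β.toAlgebra
  change _ ↔ PreservesPowIndependent p (algebraMap k K)
  constructor
  · intro h
    refine .of_forall_exists_factorization fun n b => ?_
    let F := IntermediateField.adjoin k (Set.range b)
    obtain ⟨s, hs, _⟩ := h F (IntermediateField.fg_adjoin_of_finite (Set.finite_range b))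
    exact ⟨F, _, algebraMap k F, algebraMap F K, .of_algebraicIndependent_of_isSeparable hs,
      (algebraMap F K).injective, rfl, fun j =>
        ⟨⟨b j, IntermediateField.subset_adjoin k _ ⟨j, rfl⟩⟩, rfl⟩⟩
  · intro h F hF
    have : Algebra.EssFiniteType k F := IntermediateField.essFiniteType_iff.2 hF
    have hkF : PreservesPowIndependent p (algebraMap k F) :=
      .of_injective F.val F.val.injective h
    exact hkF.exists_algebraicIndependent_isSeparable

theorem directLimit_structure_map_separable_general
    {k : ℕ → Type u} {K : Type u} [∀ i, Field (k i)] [Field K] (α : ∀ i, k i →+* k (i + 1))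
    (hα : ∀ i, (α i).IsSeparableFieldHom)
    (β : ∀ i, k i →+* K)
    (hcompat : ∀ i, β i = (β (i + 1)).comp (α i))
    (hunion : ∀ x : K, ∃ i, x ∈ Set.range (β i)) :
    (β 0).IsSeparableFieldHom := by
  obtain ⟨p, _⟩ := ExpChar.exists (k 0)
  have : ExpChar K p := expChar_of_injective_ringHom (β 0).injective p
  have (i : ℕ) : ExpChar (k i) p := (β i).expChar (β i).injective p
  simp only [isSeparableFieldHom_iff_preservesPowIndependent p] at hα ⊢
  have hfactor (i : ℕ) : ∃ g : k 0 →+* k i, PreservesPowIndependent p g ∧ β 0 = (β i).comp g := by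
    induction i with
    | zero => exact ⟨.id _, .id, rfl⟩
    | succ i ih =>
      obtain ⟨g, hg, hβ⟩ := ih
      exact ⟨(α i).comp g, (hα i).comp hg, by rw [hβ, hcompat i, RingHom.comp_assoc]⟩
  have hmono : Monotone fun i => Set.range (β i) := monotone_nat_of_le_succ fun i => by
    rw [hcompat i]
    exact Set.range_comp_subset_range (α i) (β (i + 1))
  refine .of_forall_exists_factorization fun n b => ?_
  choose e he using fun j => hunion (b j)
  obtain ⟨m, hm⟩ := Finite.exists_le e
  obtain ⟨g, hg, hβ⟩ := hfactor m
  exact ⟨k m, _, g, β m, hg, (β m).injective, hβ, fun j => hmono (hm j) (he j)⟩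

/-- Let `α : k → k` be a separable field endomorphism and let `K` be the
direct limit of `k →α k →α ⋯`, presented by compatible maps `βᵢ : k → K` with
`βᵢ = β_{i+1} ∘ α` and `K = ⋃ᵢ im(βᵢ)`.  Then the structure map `β = β₀ : k → K`
is a separable field extension. -/
theorem directLimit_structure_map_separable
    {k K : Type u} [Field k] [Field K] (α : k →+* k)
    (hα : α.IsSeparableFieldHom)
    (β : ℕ → (k →+* K))
    (hcompat : ∀ i : ℕ, β i = (β (i + 1)).comp α)
    (hunion : ∀ x : K, ∃ i : ℕ, x ∈ Set.range (β i)) :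
    (β 0).IsSeparableFieldHom :=
  directLimit_structure_map_separable_general (fun _ => α) (fun _ => hα) β hcompat hunion
end

section
/- Let R → S be a local homomorphism of Noetherian local rings, M a homologically finite S-complex, and φ : R → R a contracting endomorphism. Suppose there are infinitely many n ∈ ℕ for which there exists an integer t_n > sup(M) with Ext^i_R(M, ^nR) = 0 for all t_n ≤ i ≤ t_n + depth(R). Then pd_R(M) < ∞. -/
open CategoryTheory Limits IsLocalRing

/-- The hyper-Ext group `Ext^i_R(M, N)` of a cochain complex `M` of `R`-modules and an
`R`-module `N`: morphisms `M ⟶ N[i]` in the derived category `D(R)`. -/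
noncomputable def hyperExt (R : Type u) [CommRing R]
    [HasDerivedCategory (ModuleCat.{u} R)]
    (M : CochainComplex (ModuleCat.{u} R) ℤ) (N : ModuleCat.{u} R) (i : ℤ) :=
  (DerivedCategory.Q.obj M) ⟶ (((DerivedCategory.singleFunctor (ModuleCat.{u} R) 0).obj N)⟦i⟧)

/-- The depth of a Noetherian local ring `R`: the least `n` with `Ext^n_R(k, R) ≠ 0`. -/
noncomputable def depthNat (R : Type u) [CommRing R] [IsLocalRing R] : ℕ :=
  sInf {n : ℕ | ¬ Subsingleton (((Ext R (ModuleCat.{u} R) n).obj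
    (Opposite.op (ModuleCat.of R (ResidueField R)))).obj (ModuleCat.of R R))}

/-!
Write `𝔪` for the maximal ideal of `R`, `k` for its residue field, and let `x` be a maximal
regular sequence of `R`, whose length is `depth R`. The module `R ⧸ (x)` has a nonzero socle
element, which lies outside `𝔪 ^ n (R ⧸ (x))` for some `n`. As soon as a power of `φ` maps `𝔪` into
`𝔪 ^ n`, the residue field is a direct summand of `R ⧸ (x)` viewed as an `R`-module through that
power. Killing `x` element by element costs one degree of `Ext` each, so the hypothesis yields
`Ext^t_R(M, k) = 0` for some `t > sup M`.

Next, write `S` as a quotient of a polynomial ring `A` over `R`, with kernel `J`, and resolve `M` by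
a complex `K` of projective `A`-modules, which are also projective over `R`. The homology of `K`
is Noetherian over `A` and killed by `J`, and `𝔪 A` lies in every maximal ideal containing `J`, so
Nakayama's lemma applies to the homology of `K ⧸ I K` for ideals `I` of `R`. By Noetherian
induction on `I`, the vanishing at `k` propagates to all `R ⧸ I`, and the `t`-th syzygy of `M`
is flat over `R`.

Finally, a flat module over a Noetherian ring has projective dimension at most the Krull dimension.
This amounts to the vanishing of `Ext^j(F, G)` for flat `F` and `G` and large `j`. There `G` is a
pure submodule of the product over primes `p` of the modules `Hom(E(R/p), G ⊗ E(R/p))`, which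
admit no higher extensions by flat modules, and the cokernel of this embedding has no fibres at
the maximal elements of the set of primes that occur. So the embedding can be iterated at most
`dim R + 1` times.
-/

universe u

section InjectiveHull

variable {R : Type u} [CommRing R]

lemma exists_injective_embedding (N : Type u) [AddCommGroup N] [Module R N] :
    ∃ (J : ModuleCat.{u} R) (i : N →ₗ[R] J), Module.Injective R J ∧ Function.Injective i :=
  ⟨Injective.under (ModuleCat.of R N), (Injective.ι (ModuleCat.of R N)).hom,
    (Module.injective_iff_injective_object R _).2
      (inferInstanceAs (Injective (Injective.under (ModuleCat.of R N)))),
    (ModuleCat.mono_iff_injective _).1 inferInstance⟩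

lemma injective_of_retract {E J : Type u} [AddCommGroup E] [Module R E] [AddCommGroup J]
    [Module R J] [hJ : Module.Injective R J] (i : E →ₗ[R] J) (p : J →ₗ[R] E)
    (hpi : ∀ x, p (i x) = x) : Module.Injective R E where
  out _ _ _ _ _ _ f hf g := by
    obtain ⟨h, hh⟩ := hJ.out f hf (i ∘ₗ g)
    exact ⟨p ∘ₗ h, fun x ↦ by simp [hh, hpi]⟩

lemma exists_maximal_submodule_subset {J : Type*} [AddCommGroup J] [Module R J] {s : Set J}
    (N : Submodule R J) (hN : (N : Set J) ⊆ s) :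
    ∃ E, N ≤ E ∧ Maximal (fun E : Submodule R J ↦ (E : Set J) ⊆ s) E := by
  refine zorn_le_nonempty₀ {E : Submodule R J | (E : Set J) ⊆ s} (fun c hc hchain y hy ↦ ?_) N hN
  refine ⟨sSup c, fun z hz ↦ ?_, fun E hE ↦ le_sSup hE⟩
  obtain ⟨E, hE, hzE⟩ := (Submodule.mem_sSup_of_directed ⟨y, hy⟩ hchain.directedOn).1 hz
  exact hc hE hzE

/-- The elements `y` of `J` such that `R y` meets `N` nontrivially unless `y = 0`. A submodule
`E ≥ N` is an essential extension of `N` exactly when it is contained in this set. -/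
def essentialSet {J : Type*} [AddCommGroup J] [Module R J] (N : Submodule R J) : Set J :=
  {y | y ≠ 0 → ∃ r : R, r • y ∈ N ∧ r • y ≠ 0}

lemma exists_add_smul_mem_of_notMem {J : Type*} [AddCommGroup J] [Module R J]
    {E U : Submodule R J}
    (hU : Maximal (fun U : Submodule R J ↦ (U : Set J) ⊆ {y | y ∈ E → y = 0}) U)
    {w : J} (hw : w ∉ U) : ∃ u ∈ U, ∃ r : R, u + r • w ∈ E ∧ u + r • w ≠ 0 := by
  by_contra! hcon
  have hsup : ((U ⊔ R ∙ w : Submodule R J) : Set J) ⊆ {y | y ∈ E → y = 0} := by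
    intro y hy hyE
    obtain ⟨u, hu, v, hv, rfl⟩ := Submodule.mem_sup.1 hy
    obtain ⟨r, rfl⟩ := Submodule.mem_span_singleton.1 hv
    exact hcon u hu r hyE
  exact hw (hU.2 hsup le_sup_left (Submodule.mem_sup_right (Submodule.mem_span_singleton_self w)))

lemma range_subset_essentialSet {J : Type*} [AddCommGroup J] [Module R J] {N E U : Submodule R J}
    (hE : (E : Set J) ⊆ essentialSet N)
    (hU : Maximal (fun U : Submodule R J ↦ (U : Set J) ⊆ {y | y ∈ E → y = 0}) U)
    {p : J →ₗ[R] J} (hpE : ∀ y ∈ E, p y = y) (hpU : ∀ y ∈ U, p y = 0) :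
    (LinearMap.range p : Set J) ⊆ essentialSet N := by
  rintro _ ⟨w, rfl⟩ hw
  obtain ⟨u, hu, r, hmem, hne⟩ := exists_add_smul_mem_of_notMem hU (fun h ↦ hw (hpU w h))
  have hrw : r • p w = u + r • w := by
    rw [← hpE _ hmem, map_add, hpU u hu, zero_add, map_smul]
  obtain ⟨s, hs, hs0⟩ := hE hmem hne
  exact ⟨s * r, by rwa [mul_smul, hrw], by rwa [mul_smul, hrw]⟩

lemma exists_injective_essential_extension {J : Type u} [AddCommGroup J] [Module R J]
    [Module.Injective R J] (N : Submodule R J) :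
    ∃ E : Submodule R J, N ≤ E ∧ (E : Set J) ⊆ essentialSet N ∧ Module.Injective R E := by
  obtain ⟨E, hNE, hE⟩ := exists_maximal_submodule_subset (s := essentialSet N) N
    fun y hy hy0 ↦ ⟨1, by simpa using hy, by simpa using hy0⟩
  obtain ⟨U, -, hU⟩ := exists_maximal_submodule_subset (s := {y | y ∈ E → y = 0})
    (⊥ : Submodule R J) fun y hy _ ↦ by simpa using hy
  have hinj : Function.Injective (U.mkQ ∘ₗ E.subtype) := by
    refine (injective_iff_map_eq_zero _).2 fun y hy ↦ Subtype.ext (hU.prop ?_ y.2)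
    simpa using hy
  obtain ⟨g, hg⟩ := Module.Injective.out _ hinj E.subtype
  have hpE : ∀ y ∈ E, (g ∘ₗ U.mkQ) y = y := fun y hy ↦ hg ⟨y, hy⟩
  have hpU : ∀ y ∈ U, (g ∘ₗ U.mkQ) y = 0 := fun y hy ↦ by
    have hy' : U.mkQ y = 0 := (Submodule.Quotient.mk_eq_zero U).2 hy
    rw [LinearMap.comp_apply, hy', map_zero]
  have hrange : LinearMap.range (g ∘ₗ U.mkQ) ≤ E :=
    hE.2 (range_subset_essentialSet hE.prop hU hpE hpU) fun y hy ↦ ⟨y, hpE y hy⟩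
  exact ⟨E, hNE, hE.prop, injective_of_retract E.subtype
    ((g ∘ₗ U.mkQ).codRestrict E fun x ↦ hrange ⟨x, rfl⟩) fun y ↦ Subtype.ext (hpE y y.2)⟩

/-- The characterization of the injective hull of the cyclic module `R ⧸ I`, as generated by
`e`, that the arguments below rely on: an injective module that is an essential extension of
`R e`, where `e` has annihilator `I`. -/
structure IsCyclicHull (I : Ideal R) (E : Type u) [AddCommGroup E] [Module R E] (e : E) : Prop where
  injective : Module.Injective R E
  smul_eq_zero_iff (r : R) : r • e = 0 ↔ r ∈ I
  exists_smul_eq_smul (y : E) : y ≠ 0 → ∃ r s : R, r • y = s • e ∧ s • e ≠ 0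

lemma exists_isCyclicHull (I : Ideal R) :
    ∃ (E : ModuleCat.{u} R) (e : E), IsCyclicHull I E e := by
  obtain ⟨J, i, _, hi⟩ := exists_injective_embedding (R := R) (R ⧸ I)
  set e : J := i (Ideal.Quotient.mk I 1)
  obtain ⟨E, heE, hess, hE⟩ := exists_injective_essential_extension (R ∙ e)
  refine ⟨ModuleCat.of R E, ⟨e, heE (Submodule.mem_span_singleton_self e)⟩, hE, fun r ↦ ?_,
    fun y hy ↦ ?_⟩
  · rw [← Submodule.coe_eq_zero, Submodule.coe_smul, ← map_smul, map_eq_zero_iff i hi,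
      ← Ideal.Quotient.eq_zero_iff_mem, Algebra.smul_def, map_one, mul_one,
      Ideal.Quotient.algebraMap_eq]
  · obtain ⟨r, hr, hr0⟩ := hess y.2 fun h ↦ hy (Subtype.ext h)
    obtain ⟨s, hs⟩ := Submodule.mem_span_singleton.1 hr
    exact ⟨r, s, Subtype.ext hs.symm, fun h ↦ hr0 (hs ▸ congrArg Subtype.val h)⟩

end InjectiveHull

section InjectiveTensor

open TensorProduct

variable {R : Type u} [CommRing R]

lemma exists_comp_eq_of_ker_le {A B : Type*} {X : Type u} [AddCommGroup A] [Module R A]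
    [AddCommGroup B] [Module R B] [AddCommGroup X] [Module R X] [Module.Injective R X]
    (f : A →ₗ[R] B) (g : A →ₗ[R] X) (h : LinearMap.ker f ≤ LinearMap.ker g) :
    ∃ e : B →ₗ[R] X, e ∘ₗ f = g := by
  have hinj : Function.Injective ((LinearMap.ker f).liftQ f le_rfl) :=
    LinearMap.ker_eq_bot.1 (Submodule.ker_liftQ_eq_bot' _ f rfl)
  obtain ⟨e, he⟩ := Module.Injective.extension_property R X _ _ _ hinj
    ((LinearMap.ker f).liftQ g h)
  exact ⟨e, LinearMap.ext fun a ↦ LinearMap.congr_fun he (Submodule.Quotient.mk a)⟩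

/-- The map `y ↦ (a i • y)ᵢ` given by a column vector `a` with entries in `R`. -/
def columnMap {ι : Type*} (a : ι → R) (X : Type*) [AddCommGroup X] [Module R X] :
    X →ₗ[R] ι → X :=
  LinearMap.pi fun i ↦ a i • LinearMap.id

/-- The map `x ↦ (∑ i, b j i • x i)ⱼ` given by a matrix `b` with entries in `R`. -/
def matrixMap {ι κ : Type*} [Fintype ι] (b : Matrix κ ι R) (X : Type*) [AddCommGroup X]
    [Module R X] : (ι → X) →ₗ[R] κ → X :=
  LinearMap.pi fun j ↦ ∑ i, b j i • LinearMap.proj i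

@[simp]
lemma columnMap_apply {ι : Type*} (a : ι → R) {X : Type*} [AddCommGroup X] [Module R X] (y : X)
    (i : ι) : columnMap a X y i = a i • y := rfl

@[simp]
lemma matrixMap_apply {ι κ : Type*} [Fintype ι] (b : Matrix κ ι R) {X : Type*} [AddCommGroup X]
    [Module R X] (x : ι → X) (j : κ) : matrixMap b X x j = ∑ i, b j i • x i := by
  simp [matrixMap]

lemma piRight_lTensor_columnMap {ι : Type*} [Fintype ι] [DecidableEq ι] (a : ι → R)
    (G X : Type*) [AddCommGroup G] [Module R G] [AddCommGroup X] [Module R X] (w : G ⊗[R] X) :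
    piRight R R G (fun _ : ι ↦ X) ((columnMap a X).lTensor G w) = columnMap a (G ⊗[R] X) w := by
  induction w with
  | zero => simp
  | add w w' hw hw' => simp only [map_add, hw, hw']
  | tmul g y => ext i; simp

lemma piRight_lTensor_matrixMap {ι κ : Type*} [Fintype ι] [DecidableEq ι] [Fintype κ]
    [DecidableEq κ] (b : Matrix κ ι R) (G X : Type*) [AddCommGroup G] [Module R G]
    [AddCommGroup X] [Module R X] (w : G ⊗[R] (ι → X)) :
    piRight R R G (fun _ : κ ↦ X) ((matrixMap b X).lTensor G w) =
      matrixMap b (G ⊗[R] X) (piRight R R G (fun _ : ι ↦ X) w) := by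
  induction w with
  | zero => simp
  | add w w' hw hw' => simp only [map_add, hw, hw']
  | tmul g x => ext j; simp [tmul_sum]

lemma exact_columnMap_matrixMap_tensor {ι κ : Type*} [Fintype ι] [Finite κ] {a : ι → R}
    {b : Matrix κ ι R} {X : Type*} [AddCommGroup X] [Module R X]
    (h : Function.Exact (columnMap a X) (matrixMap b X)) (G : Type*) [AddCommGroup G] [Module R G]
    [Module.Flat R G] :
    Function.Exact (columnMap a (G ⊗[R] X)) (matrixMap b (G ⊗[R] X)) := by
  classical
  cases nonempty_fintype κ
  refine (Function.Exact.iff_of_ladder_linearEquiv (e₁ := LinearEquiv.refl R (G ⊗[R] X))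
    (e₂ := piRight R R G fun _ : ι ↦ X) (e₃ := piRight R R G fun _ : κ ↦ X)
    (LinearMap.ext fun w ↦ ?_) (LinearMap.ext fun w ↦ ?_)).2 (Module.Flat.lTensor_exact G h)
  · exact (piRight_lTensor_columnMap a G X w).symm
  · exact (piRight_lTensor_matrixMap b G X w).symm

lemma exact_columnMap_matrixMap_of_span_eq {ι κ : Type*} [Fintype ι] {a : ι → R}
    {b : Matrix κ ι R}
    (hb : Submodule.span R (Set.range b) = LinearMap.ker (Fintype.linearCombination R a))
    (X : Type u) [AddCommGroup X] [Module R X] [Module.Injective R X] :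
    Function.Exact (columnMap a X) (matrixMap b X) := by
  classical
  intro x
  constructor
  · intro hx
    obtain ⟨e, he⟩ := exists_comp_eq_of_ker_le (Fintype.linearCombination R a)
      (Fintype.linearCombination R x) (by
        rw [← hb, Submodule.span_le]
        rintro _ ⟨j, rfl⟩
        simpa [Fintype.linearCombination_apply] using congrFun hx j)
    refine ⟨e 1, funext fun i ↦ ?_⟩
    simpa [← map_smul] using LinearMap.congr_fun he (Pi.single i 1)
  · rintro ⟨y, rfl⟩
    ext j
    have hj : b j ∈ LinearMap.ker (Fintype.linearCombination R a) :=
      hb ▸ Submodule.subset_span ⟨j, rfl⟩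
    rw [LinearMap.mem_ker, Fintype.linearCombination_apply] at hj
    simp_rw [matrixMap_apply, columnMap_apply, smul_smul, ← Finset.sum_smul, ← smul_eq_mul, hj,
      zero_smul, Pi.zero_apply]

lemma exists_syzygy_matrix [IsNoetherianRing R] {ι : Type*} [Fintype ι] (a : ι → R) :
    ∃ (m : ℕ) (b : Matrix (Fin m) ι R),
      Submodule.span R (Set.range b) = LinearMap.ker (Fintype.linearCombination R a) :=
  Submodule.fg_iff_exists_fin_generating_family.1 (IsNoetherian.noetherian _)

lemma injective_of_forall_exact [IsNoetherianRing R] {W : Type u} [AddCommGroup W] [Module R W]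
    (h : ∀ (n m : ℕ) (a : Fin n → R) (b : Matrix (Fin m) (Fin n) R),
      Submodule.span R (Set.range b) = LinearMap.ker (Fintype.linearCombination R a) →
        Function.Exact (columnMap a W) (matrixMap b W)) : Module.Injective R W := by
  refine Module.Baer.injective fun I f ↦ ?_
  obtain ⟨n, a, rfl⟩ := Submodule.fg_iff_exists_fin_generating_family.1 (IsNoetherian.noetherian I)
  obtain ⟨m, b, hb⟩ := exists_syzygy_matrix a
  let a' (i : Fin n) : Submodule.span R (Set.range a) := ⟨a i, Submodule.subset_span ⟨i, rfl⟩⟩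
  obtain ⟨y, hy⟩ := (h n m a b hb fun i ↦ f (a' i)).1 <| by
    ext j
    have hj : ∑ i, b j i • a' i = 0 := Subtype.ext <| by
      simpa [Fintype.linearCombination_apply] using (hb ▸ Submodule.subset_span ⟨j, rfl⟩ :
        b j ∈ LinearMap.ker (Fintype.linearCombination R a))
    simp_rw [matrixMap_apply, ← map_smul, ← map_sum, hj, map_zero, Pi.zero_apply]
  refine ⟨LinearMap.toSpanSingleton R W y, fun x hx ↦ ?_⟩
  obtain ⟨c, rfl⟩ := (Submodule.mem_span_range_iff_exists_fun R).1 hx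
  have hsum : (⟨∑ i, c i • a i, hx⟩ : Submodule.span R (Set.range a)) = ∑ i, c i • a' i :=
    Subtype.ext (by simp [a'])
  simp_rw [hsum, map_sum, map_smul, ← congrFun hy, columnMap_apply,
    LinearMap.toSpanSingleton_apply]

instance injective_tensorProduct [IsNoetherianRing R] (G X : Type u) [AddCommGroup X] [Module R X]
    [Module.Injective R X] [AddCommGroup G] [Module R G] [Module.Flat R G] :
    Module.Injective R (G ⊗[R] X) :=
  injective_of_forall_exact fun _ _ _ _ hb ↦
    exact_columnMap_matrixMap_tensor (exact_columnMap_matrixMap_of_span_eq hb X) G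

end InjectiveTensor

section HomInjective

variable {R : Type u} [CommRing R] {X W : Type u} [AddCommGroup X] [Module R X]
  [AddCommGroup W] [Module R W]

lemma exists_sum_smul_eq_of_ker_le [Module.Injective R W] {ι κ : Type*} [Fintype ι] [Fintype κ]
    {b : Matrix κ ι R} {h : ι → X →ₗ[R] W}
    (hb : ∀ x : ι → X, matrixMap b X x = 0 → ∑ i, h i (x i) = 0) :
    ∃ y : κ → X →ₗ[R] W, ∀ i, h i = ∑ j, b j i • y j := by
  classical
  obtain ⟨e, he⟩ := exists_comp_eq_of_ker_le (matrixMap b X) (∑ i, h i ∘ₗ LinearMap.proj i)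
    fun x hx ↦ by simpa using hb x hx
  refine ⟨fun j ↦ e ∘ₗ LinearMap.single R (fun _ ↦ X) j, fun i ↦ LinearMap.ext fun x ↦ ?_⟩
  have hsingle : matrixMap b X (Pi.single i x) = ∑ j, b j i • Pi.single j x := by
    ext j
    simp [Pi.single_apply]
  have hix := LinearMap.congr_fun he (Pi.single i x)
  rw [LinearMap.comp_apply, hsingle] at hix
  simpa [Pi.single_apply, apply_ite] using hix.symm

end HomInjective

section Purity

variable {R : Type u} [CommRing R] {P₁ P₀ : Type*} [AddCommGroup P₁] [Module R P₁]
  [AddCommGroup P₀] [Module R P₀]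

lemma mem_span_range_smul_top_iff {ι : Type*} [Fintype ι] {a : ι → R} {x : P₀} :
    x ∈ Ideal.span (Set.range a) • (⊤ : Submodule R P₀) ↔ ∃ y : ι → P₀, ∑ i, a i • y i = x := by
  constructor
  · intro hx
    refine Submodule.smul_induction_on hx (fun r hr z _ ↦ ?_) ?_
    · obtain ⟨c, rfl⟩ := Ideal.mem_span_range_iff_exists_fun.1 hr
      exact ⟨fun i ↦ c i • z, by simp [Finset.sum_smul, smul_smul, mul_comm]⟩
    · rintro _ _ ⟨y, rfl⟩ ⟨y', rfl⟩
      exact ⟨y + y', by simp [Finset.sum_add_distrib]⟩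
  · rintro ⟨y, rfl⟩
    exact Submodule.sum_mem _ fun i _ ↦
      Submodule.smul_mem_smul (Ideal.subset_span ⟨i, rfl⟩) trivial

lemma map_mem_ideal_smul_top (f : P₁ →ₗ[R] P₀) {I : Ideal R} {x : P₁}
    (hx : x ∈ I • (⊤ : Submodule R P₁)) : f x ∈ I • (⊤ : Submodule R P₀) :=
  Submodule.smul_top_le_comap_smul_top I f hx

lemma mem_colon_smul_top_of_smul_mem [Module.Flat R P₀] {I : Ideal R} {r : R} {x : P₀}
    (hx : r • x ∈ I • (⊤ : Submodule R P₀)) :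
    x ∈ I.colon (Ideal.span {r}) • (⊤ : Submodule R P₀) := by
  obtain ⟨a, ha, hax⟩ := (Submodule.mem_ideal_smul_span_iff_exists_sum I (id : P₀ → P₀) _).1
    (by rwa [Set.range_id, Submodule.span_univ])
  have hrel :
      ∑ o : Option a.support, (o.elim r fun z ↦ -a z) • (o.elim x fun z ↦ (z : P₀)) = 0 := by
    have hax' : r • x = ∑ z : a.support, a z • (z : P₀) :=
      hax.symm.trans (Finset.sum_coe_sort a.support fun z ↦ a z • z).symm
    simp [hax']
  obtain ⟨k, b, y, hy, hb⟩ := Module.Flat.isTrivialRelation_of_sum_smul_eq_zero hrel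
  rw [show x = ∑ j, b none j • y j from hy none]
  refine Submodule.sum_mem _ fun j _ ↦ Submodule.smul_mem_smul ?_ trivial
  rw [Ideal.mem_colon_span_singleton, mul_comm]
  have hbj := hb j
  simp only [Fintype.sum_option, Option.elim, neg_mul, Finset.sum_neg_distrib,
    add_neg_eq_zero] at hbj
  exact hbj ▸ I.sum_mem fun z _ ↦ I.mul_mem_right _ (ha z)

lemma mem_prime_smul_top_of_smul_mem [Module.Flat R P₀] (p : Ideal R) [p.IsPrime] {r : R}
    (hr : r ∉ p) {x : P₀} (hx : r • x ∈ p • (⊤ : Submodule R P₀)) :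
    x ∈ p • (⊤ : Submodule R P₀) :=
  Submodule.smul_mono_left
    (fun _ ha ↦
      (Ideal.IsPrime.mem_or_mem ‹_› (Ideal.mem_colon_span_singleton.1 ha)).resolve_right hr)
    (mem_colon_smul_top_of_smul_mem hx)

/-- The condition that an element of `P₁` mapped by `f` into `I P₀` is congruent modulo `I P₁` to
an element of `K`. For `K = ker f` and all `I` it says that `range f` is a pure submodule. -/
def PureAlong (f : P₁ →ₗ[R] P₀) (K : Submodule R P₁) (I : Ideal R) : Prop :=
  (I • (⊤ : Submodule R P₀)).comap f ≤ K ⊔ I • ⊤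

variable {f : P₁ →ₗ[R] P₀} {K : Submodule R P₁}

lemma smul_mem_of_mem_colon_smul_top {I : Ideal R} {r : R} {x : P₀}
    (hx : x ∈ I.colon (Ideal.span {r}) • (⊤ : Submodule R P₀)) :
    r • x ∈ I • (⊤ : Submodule R P₀) := by
  refine Submodule.smul_induction_on hx (fun a ha z _ ↦ ?_) fun x x' hx hx' ↦ ?_
  · rw [smul_smul, mul_comm]
    exact Submodule.smul_mem_smul (Ideal.mem_colon_span_singleton.1 ha) trivial
  · exact smul_add r x x' ▸ Submodule.add_mem _ hx hx'

lemma isOka_pureAlong [Module.Flat R P₀] (hK : K ≤ LinearMap.ker f) :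
    Ideal.IsOka (PureAlong f K) where
  top x _ := by simp
  oka {I r} hsup hcolon x hx := by
    have hxr : f x ∈ (I ⊔ Ideal.span {r}) • (⊤ : Submodule R P₀) :=
      Submodule.smul_mono_left le_sup_left hx
    obtain ⟨k, hk, w, hw, rfl⟩ := Submodule.mem_sup.1 (hsup hxr)
    rw [Submodule.sup_smul, Submodule.ideal_span_singleton_smul] at hw
    obtain ⟨u, hu, _, ⟨v, -, rfl⟩, rfl⟩ := Submodule.mem_sup.1 hw
    have hrv : r • f v ∈ I • (⊤ : Submodule R P₀) := by
      simpa [LinearMap.mem_ker.1 (hK hk),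
        Submodule.add_mem_iff_right _ (map_mem_ideal_smul_top f hu)] using hx
    obtain ⟨k', hk', v', hv', rfl⟩ :=
      Submodule.mem_sup.1 (hcolon (mem_colon_smul_top_of_smul_mem hrv))
    have hsplit : k + (u + r • (k' + v')) = (k + r • k') + (u + r • v') := by module
    change k + (u + r • (k' + v')) ∈ _
    rw [hsplit]
    exact Submodule.add_mem_sup (K.add_mem hk (K.smul_mem r hk'))
      (Submodule.add_mem _ hu (smul_mem_of_mem_colon_smul_top hv'))

lemma pureAlong_of_forall_isPrime [IsNoetherianRing R] [Module.Flat R P₀]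
    (hK : K ≤ LinearMap.ker f)
    (h : ∀ p : Ideal R, p.IsPrime → (∀ J, p < J → PureAlong f K J) → PureAlong f K p)
    (I : Ideal R) : PureAlong f K I := by
  by_contra hI
  obtain ⟨p, hp, hmax⟩ := set_has_maximal_iff_noetherian.2 ‹IsNoetherianRing R›
    {J | ¬ PureAlong f K J} ⟨I, hI⟩
  have hlt (J) (hJ : p < J) : PureAlong f K J := not_not.1 fun hJ' ↦ hmax J hJ' hJ
  refine hp (h p ((isOka_pureAlong hK).isPrime_of_maximal_not ⟨hp, fun J hJ hpJ ↦ ?_⟩) hlt)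
  exact not_lt_iff_le_imp_ge.1 (hmax J hJ) hpJ

lemma flat_quotient_range_of_pureAlong [Module.Flat R P₀] (hK : K ≤ LinearMap.ker f)
    (h : ∀ I, PureAlong f K I) : Module.Flat R (P₀ ⧸ LinearMap.range f) := by
  refine Module.Flat.of_forall_isTrivialRelation fun {l a z} hz ↦ ?_
  choose c hc using fun i ↦ (LinearMap.range f).mkQ_surjective (z i)
  obtain ⟨x, hx⟩ : ∑ i, a i • c i ∈ LinearMap.range f := by
    rw [← Submodule.Quotient.mk_eq_zero, ← Submodule.mkQ_apply]
    simp [map_sum, hc, hz]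
  obtain ⟨k, hk, w, hw, rfl⟩ := Submodule.mem_sup.1 <| h (Ideal.span (Set.range a)) <|
    Submodule.mem_comap.2 <| mem_span_range_smul_top_iff.2 ⟨c, hx.symm⟩
  obtain ⟨y, rfl⟩ := mem_span_range_smul_top_iff.1 hw
  have hrel : ∑ i, a i • (c i - f (y i)) = 0 := by
    simp only [smul_sub, Finset.sum_sub_distrib, ← hx, map_add, LinearMap.mem_ker.1 (hK hk),
      map_sum, map_smul, zero_add, sub_self]
  obtain ⟨k, b, v, hv, hb⟩ := Module.Flat.isTrivialRelation_of_sum_smul_eq_zero hrel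
  refine ⟨k, b, fun j ↦ (LinearMap.range f).mkQ (v j), fun i ↦ ?_, hb⟩
  have hfy : (LinearMap.range f).mkQ (f (y i)) = 0 := by simp
  simpa only [map_sub, hc, hfy, sub_zero, map_sum, map_smul] using
    congrArg (LinearMap.range f).mkQ (hv i)

end Purity

section CyclicHull

open TensorProduct

variable {R : Type u} [CommRing R] {p : Ideal R} {E : Type u} [AddCommGroup E] [Module R E] {e : E}

lemma IsCyclicHull.eq_zero_of_smul_eq_zero [p.IsPrime] (hE : IsCyclicHull p E e) {r : R}
    (hr : r ∉ p) {y : E} (hy : r • y = 0) : y = 0 := by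
  by_contra h0
  obtain ⟨a, s, has, hs⟩ := hE.exists_smul_eq_smul y h0
  have hrs : (r * s) • e = 0 := by rw [mul_smul, ← has, smul_comm, hy, smul_zero]
  rw [hE.smul_eq_zero_iff] at hrs
  exact hs ((hE.smul_eq_zero_iff s).2 ((Ideal.IsPrime.mem_or_mem ‹_› hrs).resolve_left hr))

lemma IsCyclicHull.eq_zero_of_forall_smul_eq_zero [p.IsPrime] (hE : IsCyclicHull p E e)
    {q : Ideal R} (hq : ¬ q ≤ p) {y : E} (hy : ∀ r ∈ q, r • y = 0) : y = 0 := by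
  obtain ⟨r, hrq, hrp⟩ := SetLike.not_le_iff_exists.1 hq
  exact hE.eq_zero_of_smul_eq_zero hrp (hy r hrq)

lemma IsCyclicHull.exists_notMem_smul_eq_smul [p.IsPrime] (hE : IsCyclicHull p E e) {y : E}
    (hy : ∀ r ∈ p, r • y = 0) : ∃ r ∉ p, ∃ s : R, r • y = s • e := by
  by_cases h0 : y = 0
  · exact ⟨1, (Ideal.ne_top_iff_one p).1 Ideal.IsPrime.ne_top', 0, by simp [h0]⟩
  · obtain ⟨r, s, hrs, hs⟩ := hE.exists_smul_eq_smul y h0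
    exact ⟨r, fun hr ↦ hs (hrs ▸ hy r hr), s, hrs⟩

variable {G : Type u} [AddCommGroup G] [Module R G] [Module.Flat R G]

lemma IsCyclicHull.mem_smul_top_of_tmul_eq_zero (hE : IsCyclicHull p E e) {g : G}
    (hg : g ⊗ₜ[R] e = 0) : g ∈ p • (⊤ : Submodule R G) := by
  let j : R ⧸ p →ₗ[R] E := Submodule.liftQ p (LinearMap.toSpanSingleton R E e) fun r hr ↦ by
    simpa using (hE.smul_eq_zero_iff r).2 hr
  have hj : Function.Injective j := LinearMap.ker_eq_bot.1 <|
    Submodule.ker_liftQ_eq_bot' _ _ (by ext r; simp [hE.smul_eq_zero_iff])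
  have hj1 : j (Ideal.Quotient.mk p 1) = e := one_smul R e
  have hg1 : g ⊗ₜ[R] Ideal.Quotient.mk p 1 = 0 := by
    apply Module.Flat.lTensor_preserves_injective_linearMap (M := G) j hj
    rw [map_zero, LinearMap.lTensor_tmul, hj1, hg]
  have := congrArg (tensorQuotEquivQuotSMul G p) hg1
  rwa [map_zero, tensorQuotEquivQuotSMul_tmul_mk, one_smul, Submodule.Quotient.mk_eq_zero] at this

lemma IsCyclicHull.tensor_eq_zero_of_smul_eq_zero [p.IsPrime] (hE : IsCyclicHull p E e) {r : R}
    (hr : r ∉ p) {w : G ⊗[R] E} (hw : r • w = 0) : w = 0 := by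
  have hinj : Function.Injective (r • LinearMap.id : E →ₗ[R] E) :=
    (injective_iff_map_eq_zero _).2 fun y hy ↦ hE.eq_zero_of_smul_eq_zero hr hy
  apply Module.Flat.lTensor_preserves_injective_linearMap (M := G) _ hinj
  simpa [LinearMap.lTensor_smul] using hw

lemma mem_range_lTensor_of_forall_smul_eq_zero [IsNoetherianRing R] {w : G ⊗[R] E}
    (hw : ∀ r ∈ p, r • w = 0) :
    w ∈ LinearMap.range ((Submodule.torsionBySet R E p).subtype.lTensor G) := by
  obtain ⟨n, a, rfl⟩ := Submodule.fg_iff_exists_fin_generating_family.1 (IsNoetherian.noetherian p)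
  have hker : LinearMap.ker (columnMap a E) = Submodule.torsionBySet R E (Set.range a) := by
    ext y
    simp [funext_iff]
  rw [Ideal.submodule_span_eq, ← Submodule.torsionBySet_eq_torsionBySet_span, ← hker]
  refine (Module.Flat.lTensor_exact G (LinearMap.exact_subtype_ker_map (columnMap a E)) w).1 ?_
  rw [← LinearEquiv.map_eq_zero_iff (piRight R R G fun _ : Fin n ↦ E), piRight_lTensor_columnMap]
  exact funext fun i ↦ hw _ (Submodule.subset_span ⟨i, rfl⟩)

lemma IsCyclicHull.exists_smul_eq_tmul [IsNoetherianRing R] [p.IsPrime] (hE : IsCyclicHull p E e)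
    {w : G ⊗[R] E} (hw : ∀ r ∈ p, r • w = 0) : ∃ s ∉ p, ∃ g : G, s • w = g ⊗ₜ e := by
  obtain ⟨v, rfl⟩ := mem_range_lTensor_of_forall_smul_eq_zero hw
  clear hw
  induction v with
  | zero => exact ⟨1, (Ideal.ne_top_iff_one p).1 Ideal.IsPrime.ne_top', 0, by simp⟩
  | add v v' hv hv' =>
    obtain ⟨s, hs, g, h⟩ := hv
    obtain ⟨s', hs', g', h'⟩ := hv'
    refine ⟨s * s', fun hmem ↦ (Ideal.IsPrime.mem_or_mem ‹_› hmem).elim hs hs',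
      s' • g + s • g', ?_⟩
    rw [map_add, smul_add, mul_smul, mul_smul, h', smul_comm, h, add_tmul, smul_tmul', smul_tmul']
  | tmul g y =>
    obtain ⟨s, hs, r, h⟩ := hE.exists_notMem_smul_eq_smul fun r hr ↦
      (Submodule.mem_torsionBySet_iff (p : Set R) y.1).1 y.2 ⟨r, hr⟩
    exact ⟨s, hs, r • g, by
      rw [LinearMap.lTensor_tmul, ← tmul_smul, Submodule.subtype_apply, h, tmul_smul, smul_tmul']⟩

end CyclicHull

section CotorsionEmbedding

open TensorProduct

variable {R : Type u} [CommRing R]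

/-- The injective hull of `R ⧸ p`. -/
noncomputable def primeHull (p : PrimeSpectrum R) : ModuleCat.{u} R :=
  (exists_isCyclicHull p.asIdeal).choose

/-- The generator of the copy of `R ⧸ p` inside its injective hull. -/
noncomputable def primeHullGenerator (p : PrimeSpectrum R) : primeHull p :=
  (exists_isCyclicHull p.asIdeal).choose_spec.choose

lemma isCyclicHull_primeHull (p : PrimeSpectrum R) :
    IsCyclicHull p.asIdeal (primeHull p) (primeHullGenerator p) :=
  (exists_isCyclicHull p.asIdeal).choose_spec.choose_spec

instance injective_primeHull (p : PrimeSpectrum R) : Module.Injective R (primeHull p) :=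
  (isCyclicHull_primeHull p).injective

variable (s : Set (PrimeSpectrum R)) (G : Type u) [AddCommGroup G] [Module R G]

/-- The product of the modules `Hom(E(R/p), G ⊗ E(R/p))` over the primes `p` in `s`. For `G` flat
it is a flat cotorsion module, the part of the cotorsion envelope of `G` that lives on `s`. -/
abbrev CotorsionProduct : Type u :=
  (p : s) → primeHull p.1 →ₗ[R] G ⊗[R] primeHull p.1

/-- The map `g ↦ (x ↦ g ⊗ x)ₚ` from `G` to its cotorsion product. -/
noncomputable def toCotorsionProduct : G →ₗ[R] CotorsionProduct s G :=
  LinearMap.pi fun p ↦ TensorProduct.mk R G (primeHull p.1)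

/-- The flat module `G` has no fibres outside `s`: this plays the role of `G` being a summand of
a product of completions of free modules at the primes in `s`. -/
def DivisibleOff : Prop := ∀ p ∉ s, p.asIdeal • (⊤ : Submodule R G) = ⊤

variable {s G}

variable [IsNoetherianRing R] [Module.Flat R G]

instance flat_cotorsionProduct : Module.Flat R (CotorsionProduct s G) := by
  refine Module.Flat.of_forall_isTrivialRelation fun {l a h} hh ↦ ?_
  obtain ⟨m, b, hb⟩ := exists_syzygy_matrix a
  have hsolve (p : s) : ∃ y : Fin m → primeHull p.1 →ₗ[R] G ⊗[R] primeHull p.1,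
      ∀ i, h i p = ∑ j, b j i • y j := by
    refine exists_sum_smul_eq_of_ker_le fun x hx ↦ ?_
    obtain ⟨y, rfl⟩ := (exact_columnMap_matrixMap_of_span_eq hb (primeHull p.1) x).1 hx
    simpa using LinearMap.congr_fun (congrFun hh p) y
  choose y hy using hsolve
  refine ⟨m, fun i j ↦ b j i, fun j p ↦ y p j, fun i ↦ funext fun p ↦ by simp [hy], fun j ↦ ?_⟩
  have hj : b j ∈ LinearMap.ker (Fintype.linearCombination R a) :=
    hb ▸ Submodule.subset_span ⟨j, rfl⟩
  simpa [Fintype.linearCombination_apply, mul_comm] using hj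

lemma exists_extend_to_cotorsionProduct {P : Type u} [AddCommGroup P] [Module R P]
    (K : Submodule R P) [Module.Flat R (P ⧸ K)] (f : K →ₗ[R] CotorsionProduct s G) :
    ∃ g : P →ₗ[R] CotorsionProduct s G, g ∘ₗ K.subtype = f := by
  have hextend (p : s) : ∃ g : P →ₗ[R] primeHull p.1 →ₗ[R] G ⊗[R] primeHull p.1,
      g ∘ₗ K.subtype = LinearMap.proj p ∘ₗ f := by
    have hinj : Function.Injective (K.subtype.lTensor (primeHull p.1)) :=
      LinearMap.lTensor_injective_of_exact_of_flat K.mkQ K.mkQ_surjective K.subtype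
        K.subtype_injective (LinearMap.exact_subtype_mkQ K) _
    obtain ⟨e, he⟩ := exists_comp_eq_of_ker_le (K.subtype.lTensor (primeHull p.1))
      (TensorProduct.lift (LinearMap.proj p ∘ₗ f).flip)
      ((LinearMap.ker_eq_bot.2 hinj).trans_le bot_le)
    refine ⟨(TensorProduct.curry e).flip, LinearMap.ext fun k ↦ LinearMap.ext fun x ↦ ?_⟩
    simpa using LinearMap.congr_fun he (x ⊗ₜ k)
  choose g hg using hextend
  exact ⟨LinearMap.pi g, LinearMap.ext fun k ↦ funext fun p ↦ LinearMap.congr_fun (hg p) k⟩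

lemma mem_smul_top_cotorsionProduct {I : Ideal R} {h : CotorsionProduct s G}
    (hh : ∀ p (x : primeHull p.1), (∀ r ∈ I, r • x = 0) → h p x = 0) :
    h ∈ I • (⊤ : Submodule R (CotorsionProduct s G)) := by
  obtain ⟨n, a, rfl⟩ := Submodule.fg_iff_exists_fin_generating_family.1 (IsNoetherian.noetherian I)
  have hsolve (p : s) : ∃ y : Fin n → primeHull p.1 →ₗ[R] G ⊗[R] primeHull p.1,
      ∀ _ : Unit, h p = ∑ j, a j • y j := by
    refine exists_sum_smul_eq_of_ker_le (b := .of fun j _ ↦ a j) fun x hx ↦ ?_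
    have hle : Submodule.span R (Set.range a) ≤
        LinearMap.ker (LinearMap.toSpanSingleton R (primeHull p.1) (x ())) := by
      rw [Submodule.span_le]
      rintro _ ⟨j, rfl⟩
      have hxj := congrFun hx j
      rwa [matrixMap_apply, Finset.univ_unique, Finset.sum_singleton] at hxj
    simpa using hh p (x ()) hle
  choose y hy using hsolve
  refine mem_span_range_smul_top_iff.2 ⟨fun j p ↦ y p j, funext fun p ↦ ?_⟩
  simp [hy p ()]

lemma pureAlong_toCotorsionProduct (hG : DivisibleOff s G) (I : Ideal R) :
    PureAlong (toCotorsionProduct s G) ⊥ I := by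
  refine pureAlong_of_forall_isPrime (f := toCotorsionProduct s G) bot_le
    (fun p hp _ g hg ↦ Submodule.mem_sup_right ?_) I
  have hull := isCyclicHull_primeHull (⟨p, hp⟩ : PrimeSpectrum R)
  by_cases hps : ⟨p, hp⟩ ∈ s
  · let evalGenerator : CotorsionProduct s G →ₗ[R] G ⊗[R] primeHull ⟨p, hp⟩ :=
      LinearMap.applyₗ (primeHullGenerator ⟨p, hp⟩) ∘ₗ LinearMap.proj (⟨⟨p, hp⟩, hps⟩ : s)
    have hle : p • (⊤ : Submodule R (CotorsionProduct s G)) ≤ LinearMap.ker evalGenerator :=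
      Submodule.smul_le.2 fun r hr h _ ↦ by
        simp [evalGenerator, ← map_smul, (hull.smul_eq_zero_iff r).2 hr]
    exact hull.mem_smul_top_of_tmul_eq_zero (hle hg)
  · exact (hG ⟨p, hp⟩ hps).ge trivial

lemma toCotorsionProduct_injective (hG : DivisibleOff s G) :
    Function.Injective (toCotorsionProduct s G) :=
  (injective_iff_map_eq_zero _).2 fun g hg ↦ by
    simpa using pureAlong_toCotorsionProduct hG ⊥ (x := g) (by simp [hg])

lemma flat_cotorsionProduct_quotient (hG : DivisibleOff s G) :
    Module.Flat R (CotorsionProduct s G ⧸ LinearMap.range (toCotorsionProduct s G)) :=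
  flat_quotient_range_of_pureAlong bot_le (pureAlong_toCotorsionProduct hG)

lemma DivisibleOff.eq_zero (hG : DivisibleOff (∅ : Set (PrimeSpectrum R)) G) (g : G) : g = 0 := by
  have hpure : PureAlong (0 : G →ₗ[R] G) ⊥ ⊥ := pureAlong_of_forall_isPrime bot_le
    (fun p hp _ g _ ↦ Submodule.mem_sup_right ((hG ⟨p, hp⟩ (Set.notMem_empty _)).ge trivial)) ⊥
  simpa using hpure (x := g) (by simp)

-- Only the factor at `q` sees elements killed by `q`, and there they are multiples of the
-- generator up to elements outside `q`.
lemma exists_smul_sub_mem_of_maximal {q : PrimeSpectrum R} (hq : Maximal (· ∈ s) q)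
    (h : CotorsionProduct s G) : ∃ r ∉ q.asIdeal, ∃ g : G,
      r • h - toCotorsionProduct s G g ∈ q.asIdeal • (⊤ : Submodule R (CotorsionProduct s G)) := by
  have hull := isCyclicHull_primeHull q
  obtain ⟨r, hr, g, hg⟩ := hull.exists_smul_eq_tmul (w := h ⟨q, hq.prop⟩ (primeHullGenerator q))
    fun a ha ↦ by rw [← map_smul, (hull.smul_eq_zero_iff a).2 ha, map_zero]
  refine ⟨r, hr, g, mem_smul_top_cotorsionProduct fun ⟨p, hp⟩ x hx ↦ ?_⟩
  rcases eq_or_ne p q with rfl | hpq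
  · obtain ⟨a, ha, b, hab⟩ := hull.exists_notMem_smul_eq_smul hx
    refine hull.tensor_eq_zero_of_smul_eq_zero ha ?_
    have hgen : (r • h - toCotorsionProduct s G g) ⟨p, hp⟩ (primeHullGenerator p) = 0 :=
      sub_eq_zero.2 hg
    rw [← map_smul, hab, map_smul, hgen, smul_zero]
  · have hle : ¬ q.asIdeal ≤ p.asIdeal := fun hle ↦ hpq (hq.eq_of_le hp hle).symm
    rw [(isCyclicHull_primeHull p).eq_zero_of_forall_smul_eq_zero hle hx, map_zero]

lemma DivisibleOff.cotorsionProduct_quotient (hs : IsLowerSet s) (hG : DivisibleOff s G) :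
    DivisibleOff {p ∈ s | ¬ Maximal (· ∈ s) p}
      (CotorsionProduct s G ⧸ LinearMap.range (toCotorsionProduct s G)) := by
  have := flat_cotorsionProduct_quotient hG
  refine fun q hq ↦ eq_top_iff.2 fun z _ ↦ ?_
  obtain ⟨h, rfl⟩ := (LinearMap.range (toCotorsionProduct s G)).mkQ_surjective z
  by_cases hqs : q ∈ s
  · obtain ⟨r, hr, g, hg⟩ := exists_smul_sub_mem_of_maximal (not_not.1 fun hmax ↦ hq ⟨hqs, hmax⟩) h
    have hg0 : (LinearMap.range (toCotorsionProduct s G)).mkQ (toCotorsionProduct s G g) = 0 := by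
      simp
    refine mem_prime_smul_top_of_smul_mem q.asIdeal hr ?_
    simpa only [map_sub, map_smul, hg0, sub_zero] using
      map_mem_ideal_smul_top (LinearMap.range (toCotorsionProduct s G)).mkQ hg
  · refine map_mem_ideal_smul_top _ (mem_smul_top_cotorsionProduct fun p x hx ↦ ?_)
    rw [(isCyclicHull_primeHull p.1).eq_zero_of_forall_smul_eq_zero
      (fun hle ↦ hqs (hs hle p.2)) hx, map_zero]

end CotorsionEmbedding

section HomExact

variable {R : Type*} [CommRing R] {P₃ P₂ P₁ P₀ N : Type*}
  [AddCommGroup P₃] [Module R P₃] [AddCommGroup P₂] [Module R P₂] [AddCommGroup P₁] [Module R P₁]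
  [AddCommGroup P₀] [Module R P₀] [AddCommGroup N] [Module R N]

/-- Exactness of `Hom(P₀, N) → Hom(P₁, N) → Hom(P₂, N)` at `Hom(P₁, N)`. -/
def HomExact (f : P₂ →ₗ[R] P₁) (g : P₁ →ₗ[R] P₀) (N : Type*) [AddCommGroup N] [Module R N] :
    Prop :=
  ∀ h : P₁ →ₗ[R] N, h ∘ₗ f = 0 → ∃ k : P₀ →ₗ[R] N, k ∘ₗ g = h

lemma exists_comp_rangeRestrict_eq {f : P₂ →ₗ[R] P₁} {g : P₁ →ₗ[R] P₀}
    (hfg : Function.Exact f g) {h : P₁ →ₗ[R] N} (hh : h ∘ₗ f = 0) :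
    ∃ k : LinearMap.range g →ₗ[R] N, k ∘ₗ g.rangeRestrict = h := by
  have hker : LinearMap.ker g ≤ LinearMap.ker h := by
    rw [hfg.linearMap_ker_eq, LinearMap.range_le_ker_iff]
    exact hh
  refine ⟨(LinearMap.ker g).liftQ h hker ∘ₗ g.quotKerEquivRange.symm, LinearMap.ext fun x ↦ ?_⟩
  exact congrArg _ (g.quotKerEquivRange_symm_apply_image x (LinearMap.mem_range_self g x))

lemma HomExact.of_extension {f₂ : P₃ →ₗ[R] P₂} {f₁ : P₂ →ₗ[R] P₁} {f₀ : P₁ →ₗ[R] P₀}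
    [Module.Projective R P₀] (hf₂ : Function.Exact f₂ f₁) (hf₁ : f₀ ∘ₗ f₁ = 0)
    {C : Type*} [AddCommGroup C] [Module R C] {u : N →ₗ[R] C} (hu : Function.Injective u)
    (hC : ∀ φ : LinearMap.range f₁ →ₗ[R] C,
      ∃ ψ : P₁ →ₗ[R] C, ψ ∘ₗ (LinearMap.range f₁).subtype = φ)
    (hN : HomExact f₁ f₀ (C ⧸ LinearMap.range u)) : HomExact f₂ f₁ N := by
  intro h hh
  obtain ⟨φ, hφ⟩ := exists_comp_rangeRestrict_eq hf₂ hh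
  obtain ⟨ψ, hψ⟩ := hC (u ∘ₗ φ)
  have hψh (x) : ψ (f₁ x) = u (h x) := by
    rw [← hφ]
    exact LinearMap.congr_fun hψ (f₁.rangeRestrict x)
  have hmkQψ : (LinearMap.range u).mkQ ∘ₗ ψ ∘ₗ f₁ = 0 := LinearMap.ext fun x ↦ by simp [hψh]
  obtain ⟨k, hk⟩ := hN ((LinearMap.range u).mkQ ∘ₗ ψ) hmkQψ
  obtain ⟨l, hl⟩ := Module.projective_lifting_property _ k (LinearMap.range u).mkQ_surjective
  have hrange (x) : (ψ - l ∘ₗ f₀) x ∈ LinearMap.range u := by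
    have hlx := (LinearMap.congr_fun hl (f₀ x)).trans (LinearMap.congr_fun hk x)
    rw [← Submodule.ker_mkQ (LinearMap.range u), LinearMap.mem_ker, LinearMap.sub_apply, map_sub]
    exact sub_eq_zero.2 hlx.symm
  let e := LinearEquiv.ofInjective u hu
  refine ⟨e.symm ∘ₗ (ψ - l ∘ₗ f₀).codRestrict _ hrange, LinearMap.ext fun x ↦ ?_⟩
  have hf₁x : f₀ (f₁ x) = 0 := LinearMap.congr_fun hf₁ x
  exact (LinearEquiv.symm_apply_eq e).2 (Subtype.ext (by simp [e, hψh, hf₁x]))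

end HomExact

section FlatResolution

variable {R : Type u} [CommRing R]

lemma flat_submodule_of_flat_quotient {P : Type*} [AddCommGroup P] [Module R P] [Module.Flat R P]
    (K : Submodule R P) [Module.Flat R (P ⧸ K)] : Module.Flat R K := by
  refine (Module.Flat.iff_rTensor_preserves_injective_linearMap).2 fun N N' _ _ _ _ f hf ↦ ?_
  have hK : Function.Injective (K.subtype.lTensor N) :=
    LinearMap.lTensor_injective_of_exact_of_flat K.mkQ K.mkQ_surjective K.subtype
      K.subtype_injective (LinearMap.exact_subtype_mkQ K) N
  have hcomm : K.subtype.lTensor N' ∘ₗ f.rTensor K = f.rTensor P ∘ₗ K.subtype.lTensor N := by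
    rw [LinearMap.lTensor_comp_rTensor, LinearMap.rTensor_comp_lTensor]
  refine Function.Injective.of_comp (f := K.subtype.lTensor N') ?_
  rw [← LinearMap.coe_comp, hcomm]
  exact (Module.Flat.rTensor_preserves_injective_linearMap f hf).comp hK

variable {P : ℕ → Type u} [∀ i, AddCommGroup (P i)] [∀ i, Module R (P i)]
  {d : ∀ i, P (i + 1) →ₗ[R] P i}

lemma flat_quotient_range [∀ i, Module.Flat R (P i)]
    (hd : ∀ i, Function.Exact (d (i + 1)) (d i))
    (h : Module.Flat R (P 0 ⧸ LinearMap.range (d 0))) :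
    ∀ i, Module.Flat R (P i ⧸ LinearMap.range (d i))
  | 0 => h
  | i + 1 => by
    have := flat_quotient_range hd h i
    have := flat_submodule_of_flat_quotient (LinearMap.range (d i))
    rw [← (hd i).linearMap_ker_eq]
    exact Module.Flat.of_linearEquiv (d i).quotKerEquivRange

variable [IsNoetherianRing R] [∀ i, Module.Projective R (P i)]

lemma DivisibleOff.homExact (hd : ∀ i, Function.Exact (d (i + 1)) (d i))
    (hflat : Module.Flat R (P 0 ⧸ LinearMap.range (d 0))) {D : ℕ} (hD : ringKrullDim R < D)
    {k : ℕ} :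
    ∀ {s : Set (PrimeSpectrum R)}, IsLowerSet s → (∀ p ∈ s, (D : ℕ∞) ≤ Order.coheight p + k) →
      ∀ {G : Type u} [AddCommGroup G] [Module R G] [Module.Flat R G], DivisibleOff s G →
      ∀ {j : ℕ}, k ≤ j → HomExact (d (j + 1)) (d j) G := by
  induction k with
  | zero =>
    intro s _ hsD G _ _ _ hG j _ h _
    obtain rfl : s = ∅ := Set.eq_empty_of_forall_notMem fun p hp ↦ by
      have hlt := (Order.coheight_le_krullDim p).trans_lt hD
      exact ((WithBot.coe_lt_coe (b := (D : ℕ∞))).1 hlt).not_ge (by simpa using hsD p hp)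
    exact ⟨0, LinearMap.ext fun x ↦ (hG.eq_zero (h x)).symm⟩
  | succ k ih =>
    intro s hs hsD G _ _ _ hG j hkj
    obtain ⟨j, rfl⟩ : ∃ i, j = i + 1 := ⟨j - 1, by omega⟩
    have := flat_quotient_range hd hflat (j + 1)
    have := flat_cotorsionProduct_quotient hG
    refine .of_extension (hd (j + 1)) (hd j).linearMap_comp_eq_zero
      (toCotorsionProduct_injective hG) (exists_extend_to_cotorsionProduct _)
      (ih (s := {p ∈ s | ¬ Maximal (· ∈ s) p}) ?_ ?_ (hG.cotorsionProduct_quotient hs) (by omega))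
    · exact fun p q hqp hp ↦ ⟨hs hqp hp.1, fun hq ↦ hp.2 (hq.eq_of_le hp.1 hqp ▸ hq)⟩
    · rintro p ⟨hp, hmax⟩
      obtain ⟨q, hq, hpq⟩ := (not_maximal_iff hp).1 hmax
      calc (D : ℕ∞) ≤ Order.coheight q + (k + 1 : ℕ) := hsD q hq
        _ = Order.coheight q + 1 + k := by push_cast; ring
        _ ≤ Order.coheight p + k := by gcongr; exact Order.coheight_add_one_le hpq

theorem homExact_of_flat_quotient_range (hd : ∀ i, Function.Exact (d (i + 1)) (d i))
    (hflat : Module.Flat R (P 0 ⧸ LinearMap.range (d 0))) {D : ℕ} (hD : ringKrullDim R < D) {j : ℕ}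
    (hj : D ≤ j) (N : Type u) [AddCommGroup N] [Module R N] : HomExact (d (j + 1)) (d j) N := by
  have := flat_quotient_range hd hflat j
  have := flat_submodule_of_flat_quotient (LinearMap.range (d j))
  obtain ⟨k, hk⟩ := DivisibleOff.homExact hd hflat hD isLowerSet_univ (fun _ _ ↦ le_add_self)
    (G := LinearMap.range (d j)) (fun p hp ↦ absurd (Set.mem_univ p) hp) hj (d j).rangeRestrict
    (LinearMap.ext fun x ↦ Subtype.ext ((hd j).apply_apply_eq_zero x))
  intro h hh
  obtain ⟨f, rfl⟩ := exists_comp_rangeRestrict_eq (hd j) hh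
  exact ⟨f ∘ₗ k, by rw [LinearMap.comp_assoc, hk]⟩

end FlatResolution

section NoetherianSupportedOn

variable {A : Type*} [CommRing A] {J : Ideal A} {Y Y' : Type*} [AddCommGroup Y] [Module A Y]
  [AddCommGroup Y'] [Module A Y']

/-- The subquotient `K / L`, formed as the image of `K` in `Y ⧸ L`, is a Noetherian module
supported on the zero locus of `J`. These subquotients form a Serre class. -/
structure IsNoetherianSupportedOn (J : Ideal A) (K L : Submodule A Y) : Prop where
  isNoetherian : IsNoetherian A (K.map L.mkQ)
  exists_pow_smul_mem : ∀ a ∈ J, ∃ n : ℕ, ∀ y ∈ K, a ^ n • y ∈ L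

namespace IsNoetherianSupportedOn

variable {K L K₁ L₁ : Submodule A Y} {K₂ L₂ : Submodule A Y'}

lemma of_le (h : K ≤ L) : IsNoetherianSupportedOn J K L where
  isNoetherian := by
    rw [(LinearMap.le_ker_iff_map (f := L.mkQ)).1 (h.trans L.ker_mkQ.ge)]
    infer_instance
  exists_pow_smul_mem a _ := ⟨0, fun y hy ↦ by simpa using h hy⟩

lemma of_le_map_sup (h : IsNoetherianSupportedOn J K₂ L₂) {α : Y' →ₗ[A] Y}
    (hL : L₂ ≤ L.comap α) (hK : K ≤ K₂.map α ⊔ L) : IsNoetherianSupportedOn J K L where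
  isNoetherian := by
    have := h.isNoetherian
    have hle : K.map L.mkQ ≤ (K₂.map L₂.mkQ).map (L₂.mapQ L α hL) := by
      refine (Submodule.map_mono hK).trans ?_
      rw [Submodule.map_sup, Submodule.mkQ_map_self, sup_bot_eq, ← Submodule.map_comp,
        ← Submodule.map_comp, Submodule.mapQ_mkQ]
    exact isNoetherian_of_le hle
  exists_pow_smul_mem a ha := by
    obtain ⟨n, hn⟩ := h.exists_pow_smul_mem a ha
    refine ⟨n, fun y hy ↦ ?_⟩
    obtain ⟨_, ⟨z, hz, rfl⟩, l, hl, rfl⟩ := Submodule.mem_sup.1 (hK hy)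
    rw [smul_add, ← map_smul]
    exact L.add_mem (hL (hn z hz)) (L.smul_mem _ hl)

lemma of_exact (h₁ : IsNoetherianSupportedOn J K₁ L₁) (h₂ : IsNoetherianSupportedOn J K₂ L₂)
    (hL₁ : L₁ ≤ L) {f : Y →ₗ[A] Y'} (hL : L ≤ L₂.comap f) (hK : K ≤ K₂.comap f)
    (hex : K ⊓ L₂.comap f ≤ K₁ ⊔ L) : IsNoetherianSupportedOn J K L where
  isNoetherian := by
    have := h₁.isNoetherian
    refine isNoetherian_submodule.2 fun N hN ↦
      Submodule.fg_of_fg_map_of_fg_inf_ker (L.mapQ L₂ f hL) ?_ ?_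
    · refine isNoetherian_submodule.1 h₂.isNoetherian _ ((Submodule.map_mono hN).trans ?_)
      rw [← Submodule.map_comp, Submodule.mapQ_mkQ, Submodule.map_comp]
      exact Submodule.map_mono (Submodule.map_le_iff_le_comap.2 hK)
    · have hnoeth : IsNoetherian A ((K₁.map L₁.mkQ).map (Submodule.factor hL₁)) := inferInstance
      refine isNoetherian_submodule.1 hnoeth _ ?_
      rintro y ⟨hy, hy'⟩
      obtain ⟨z, hz, rfl⟩ := hN hy
      have hfz : f z ∈ L₂ := (Submodule.Quotient.mk_eq_zero _).1 hy'
      obtain ⟨v, hv, l, hl, rfl⟩ := Submodule.mem_sup.1 (hex ⟨hz, hfz⟩)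
      refine ⟨L₁.mkQ v, ⟨v, hv, rfl⟩, ?_⟩
      rw [map_add, L.mkQ_apply l, (Submodule.Quotient.mk_eq_zero L).2 hl, add_zero]
      rfl
  exists_pow_smul_mem a ha := by
    obtain ⟨n, hn⟩ := h₁.exists_pow_smul_mem a ha
    obtain ⟨m, hm⟩ := h₂.exists_pow_smul_mem a ha
    refine ⟨n + m, fun y hy ↦ ?_⟩
    have hfy : f (a ^ m • y) ∈ L₂ := map_smul f (a ^ m) y ▸ hm _ (hK hy)
    obtain ⟨v, hv, l, hl, hvl⟩ := Submodule.mem_sup.1 (hex ⟨K.smul_mem (a ^ m) hy, hfy⟩)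
    rw [pow_add, mul_smul, ← hvl, smul_add]
    exact L.add_mem (hL₁ (hn v hv)) (L.smul_mem _ hl)

lemma le_of_le_smul_sup (h : IsNoetherianSupportedOn J K L) {x : A} (hx : x ∈ J.jacobson)
    (hK : K ≤ Ideal.span {x} • K ⊔ L) : K ≤ L := by
  have hle : K.map L.mkQ ≤ Ideal.span {x} • K.map L.mkQ := by
    refine (Submodule.map_mono hK).trans ?_
    rw [Submodule.map_sup, Submodule.mkQ_map_self, sup_bot_eq, Submodule.map_smul'']
  have hJ : J ≤ (K.map L.mkQ).annihilator.radical := fun a ha ↦ by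
    obtain ⟨n, hn⟩ := h.exists_pow_smul_mem a ha
    refine ⟨n, Submodule.mem_annihilator.2 ?_⟩
    rintro _ ⟨y, hy, rfl⟩
    exact (Submodule.Quotient.mk_eq_zero L).2 (hn y hy)
  have hx' : x ∈ (K.map L.mkQ).annihilator.jacobson := by
    refine Ideal.jacobson_idem.le (Ideal.jacobson_mono ?_ hx)
    exact hJ.trans Ideal.radical_le_jacobson
  have hbot := Submodule.eq_bot_of_eq_ideal_smul_of_le_jacobson_annihilator
    (isNoetherian_submodule.1 h.isNoetherian _ le_rfl) (hle.antisymm Submodule.smul_le_right)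
    ((Ideal.span_singleton_le_iff_mem _).2 hx')
  exact ((LinearMap.le_ker_iff_map (f := L.mkQ)).2 hbot).trans L.ker_mkQ.le

end IsNoetherianSupportedOn

end NoetherianSupportedOn

section ReducedHomology

variable {R A : Type u} [CommRing R] [CommRing A] [Algebra R A]

/-- The `A`-submodule `I Y` of a module `Y` over an `R`-algebra `A`, for an ideal `I` of `R`. -/
def idealMul (A : Type u) [CommRing A] [Algebra R A] (I : Ideal R) (Y : Type*) [AddCommGroup Y]
    [Module A Y] : Submodule A Y :=
  I.map (algebraMap R A) • ⊤

variable {Y Y' : Type*} [AddCommGroup Y] [Module A Y] [AddCommGroup Y'] [Module A Y']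

lemma map_mem_idealMul (f : Y →ₗ[A] Y') {I : Ideal R} {y : Y} (hy : y ∈ idealMul A I Y) :
    f y ∈ idealMul A I Y' :=
  map_mem_ideal_smul_top f hy

lemma idealMul_mono {I I' : Ideal R} (h : I ≤ I') : idealMul A I Y ≤ idealMul A I' Y :=
  Submodule.smul_mono_left (Ideal.map_mono h)

lemma algebraMap_smul_mem_idealMul {I : Ideal R} {a : R} (ha : a ∈ I) (y : Y) :
    algebraMap R A a • y ∈ idealMul A I Y :=
  Submodule.smul_mem_smul (Ideal.mem_map_of_mem _ ha) trivial

variable [Module R Y] [IsScalarTower R A Y]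

lemma mem_idealMul {I : Ideal R} {y : Y} :
    y ∈ idealMul A I Y ↔ y ∈ I • (⊤ : Submodule R Y) := by
  rw [← Submodule.restrictScalars_top R A Y, ← Ideal.smul_restrictScalars]
  rfl

lemma algebraMap_smul_mem_idealMul_iff [Module.Flat R Y] {I : Ideal R} {a : R} {y : Y} :
    algebraMap R A a • y ∈ idealMul A I Y ↔ y ∈ idealMul A (I.colon (Ideal.span {a})) Y := by
  rw [mem_idealMul, mem_idealMul, algebraMap_smul]
  exact ⟨mem_colon_smul_top_of_smul_mem, smul_mem_of_mem_colon_smul_top⟩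

lemma exists_eq_add_algebraMap_smul {I : Ideal R} {a : R} {y : Y}
    (hy : y ∈ idealMul A (I ⊔ Ideal.span {a}) Y) :
    ∃ b ∈ idealMul A I Y, ∃ z, y = b + algebraMap R A a • z := by
  rw [mem_idealMul, Submodule.sup_smul, Submodule.ideal_span_singleton_smul] at hy
  obtain ⟨b, hb, _, ⟨z, -, rfl⟩, rfl⟩ := Submodule.mem_sup.1 hy
  exact ⟨b, mem_idealMul.2 hb, z, by rw [algebraMap_smul]; rfl⟩

variable {P : ℕ → Type*} [∀ i, AddCommGroup (P i)] [∀ i, Module A (P i)]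

/-- The condition that `H_{i+1}(P / I P)` is Noetherian over `A` and supported on `V(J)`. -/
def NoetherianQuotientHomology (J : Ideal A) (d : ∀ i, P (i + 1) →ₗ[A] P i) (i : ℕ)
    (I : Ideal R) : Prop :=
  IsNoetherianSupportedOn J ((idealMul A I (P i)).comap (d i))
    (LinearMap.range (d (i + 1)) ⊔ idealMul A I (P (i + 1)))

/-- The condition that `H_{i+1}(I P)` is Noetherian over `A` and supported on `V(J)`. -/
def NoetherianSubcomplexHomology (J : Ideal A) (d : ∀ i, P (i + 1) →ₗ[A] P i) (i : ℕ)
    (I : Ideal R) : Prop :=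
  IsNoetherianSupportedOn J (LinearMap.ker (d i) ⊓ idealMul A I (P (i + 1)))
    ((idealMul A I (P (i + 2))).map (d (i + 1)))

variable {J : Ideal A} {d : ∀ i, P (i + 1) →ₗ[A] P i} {i : ℕ} {I : Ideal R}

lemma NoetherianSubcomplexHomology.quotient_succ (hdd : ∀ i, d i ∘ₗ d (i + 1) = 0)
    (hP : IsNoetherianSupportedOn J (LinearMap.ker (d (i + 1))) (LinearMap.range (d (i + 2))))
    (h : NoetherianSubcomplexHomology J d i I) : NoetherianQuotientHomology J d (i + 1) I := by
  refine hP.of_exact h le_sup_left (f := d (i + 1)) (sup_le ?_ ?_) (fun y hy ↦ ?_) ?_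
  · rintro _ ⟨y, rfl⟩
    exact ⟨0, zero_mem _, by rw [map_zero]; exact (LinearMap.congr_fun (hdd (i + 1)) y).symm⟩
  · exact fun y hy ↦ ⟨y, hy, rfl⟩
  · exact ⟨LinearMap.congr_fun (hdd i) y, hy⟩
  · rintro y ⟨-, u, hu, hyu⟩
    rw [← sub_add_cancel y u]
    refine Submodule.add_mem_sup ?_ (Submodule.mem_sup_right hu)
    rw [LinearMap.mem_ker, map_sub, hyu, sub_self]

variable [∀ i, Module R (P i)] [∀ i, IsScalarTower R A (P i)] [∀ i, Module.Flat R (P i)]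

lemma NoetherianSubcomplexHomology.sup_span_singleton (hdd : d i ∘ₗ d (i + 1) = 0) {a : R}
    (hI : NoetherianSubcomplexHomology J d i I)
    (ha : NoetherianQuotientHomology J d i (I.colon (Ideal.span {a}))) :
    NoetherianSubcomplexHomology J d i (I ⊔ Ideal.span {a}) := by
  set I' := I ⊔ Ideal.span {a}
  have hI' : I ≤ I' := le_sup_left
  have haI' : a ∈ I' := Ideal.mem_sup_right (Ideal.mem_span_singleton_self a)
  have hquot : IsNoetherianSupportedOn J
      ((idealMul A I (P i)).comap (d i) ⊓ idealMul A I' (P (i + 1)))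
      ((idealMul A I' (P (i + 2))).map (d (i + 1)) ⊔ idealMul A I (P (i + 1))) := by
    refine ha.of_le_map_sup (α := algebraMap R A a • LinearMap.id) (sup_le ?_ ?_) ?_
    · rintro _ ⟨u, rfl⟩
      exact Submodule.mem_sup_left
        ⟨algebraMap R A a • u, algebraMap_smul_mem_idealMul haI' u, map_smul _ _ _⟩
    · exact fun y hy ↦ Submodule.mem_sup_right (algebraMap_smul_mem_idealMul_iff.2 hy)
    · rintro y ⟨hy, hyI'⟩
      obtain ⟨b, hb, z, rfl⟩ := exists_eq_add_algebraMap_smul hyI'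
      have hz : algebraMap R A a • d i z ∈ idealMul A I (P i) := by
        rw [← map_smul]
        exact (Submodule.add_mem_iff_right _ (map_mem_idealMul _ hb)).1 (by simpa using hy)
      rw [add_comm b]
      exact Submodule.add_mem_sup ⟨z, algebraMap_smul_mem_idealMul_iff.1 hz, rfl⟩
        (Submodule.mem_sup_right hb)
  refine hI.of_exact hquot (Submodule.map_mono (idealMul_mono hI')) (f := LinearMap.id)
    le_sup_left ?_ ?_
  · rintro y ⟨hy, hyI'⟩
    exact ⟨by simp_all, hyI'⟩
  · rintro y ⟨⟨hy, -⟩, hy'⟩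
    obtain ⟨_, ⟨u, hu, rfl⟩, v, hv, rfl : _ + v = y⟩ := Submodule.mem_sup.1 hy'
    have hdu : d i (d (i + 1) u) = 0 := LinearMap.congr_fun hdd u
    rw [add_comm _ v]
    refine Submodule.add_mem_sup ⟨?_, hv⟩ ⟨u, hu, rfl⟩
    simpa [hdu] using hy

lemma NoetherianSubcomplexHomology.of_fg (hdd : d i ∘ₗ d (i + 1) = 0)
    (h : ∀ I : Ideal R, NoetherianQuotientHomology J d i I) (hI : I.FG) :
    NoetherianSubcomplexHomology J d i I := by
  classical
  obtain ⟨s, rfl⟩ := hI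
  induction s using Finset.induction_on with
  | empty => exact .of_le fun y hy ↦ by simp_all [idealMul]
  | insert a s _ ih =>
    rw [Finset.coe_insert, Ideal.span_insert, sup_comm]
    exact ih.sup_span_singleton hdd (h _)

lemma noetherianQuotientHomology [IsNoetherianRing R] (hdd : ∀ i, d i ∘ₗ d (i + 1) = 0)
    (hP₁ : Subsingleton (P 1))
    (hP : ∀ i, IsNoetherianSupportedOn J (LinearMap.ker (d i)) (LinearMap.range (d (i + 1)))) :
    ∀ (i : ℕ) (I : Ideal R), NoetherianQuotientHomology J d i I
  | 0, _ => .of_le (le_of_subsingleton)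
  | i + 1, I => NoetherianSubcomplexHomology.quotient_succ hdd (hP (i + 1)) <|
    .of_fg (hdd i) (noetherianQuotientHomology hdd hP₁ hP i) (IsNoetherian.noetherian I)

end ReducedHomology

section ResidueField

variable {R A : Type u} [CommRing R] [IsLocalRing R] [CommRing A] [Algebra R A]

lemma exists_linearMap_residueField_ne_zero {Y : Type*} [AddCommGroup Y] [Module R Y]
    {U : Submodule R Y} (hU : maximalIdeal R • ⊤ ≤ U) {y : Y} (hy : y ∉ U) :
    ∃ h : Y →ₗ[R] ResidueField R, U ≤ LinearMap.ker h ∧ h y ≠ 0 := by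
  have htors : Module.IsTorsionBySet R (Y ⧸ U) (maximalIdeal R : Set R) := by
    rintro ⟨z⟩ ⟨r, hr⟩
    exact (Submodule.Quotient.mk_eq_zero U).2 (hU (Submodule.smul_mem_smul hr trivial))
  let : Module (ResidueField R) (Y ⧸ U) := htors.module
  have : IsScalarTower R (ResidueField R) (Y ⧸ U) := htors.isScalarTower
  have hne : U.mkQ y ≠ 0 := fun h ↦ hy ((Submodule.Quotient.mk_eq_zero U).1 h)
  obtain ⟨f, hf⟩ :=
    not_forall.1 (mt (Module.forall_dual_apply_eq_zero_iff (ResidueField R) _).1 hne)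
  refine ⟨f.restrictScalars R ∘ₗ U.mkQ, fun u hu ↦ ?_, hf⟩
  have hu0 : U.mkQ u = 0 := (Submodule.Quotient.mk_eq_zero U).2 hu
  rw [LinearMap.mem_ker, LinearMap.comp_apply, hu0, map_zero]

lemma HomExact.pureAlong_maximalIdeal {P₂ P₁ P₀ : Type*} [AddCommGroup P₂] [Module R P₂]
    [AddCommGroup P₁] [Module R P₁] [AddCommGroup P₀] [Module R P₀] {f : P₂ →ₗ[R] P₁}
    {g : P₁ →ₗ[R] P₀} (h : HomExact f g (ResidueField R)) :
    PureAlong g (LinearMap.range f) (maximalIdeal R) := by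
  intro y hy
  by_contra hyU
  obtain ⟨φ, hφ, hφy⟩ := exists_linearMap_residueField_ne_zero le_sup_right hyU
  obtain ⟨k, rfl⟩ := h φ (LinearMap.range_le_ker_iff.1 (le_sup_left.trans hφ))
  have htriv : maximalIdeal R • (⊤ : Submodule R (ResidueField R)) = ⊥ := by
    refine eq_bot_iff.2 (Submodule.smul_le.2 fun r hr z _ ↦ (Submodule.mem_bot R).2 ?_)
    rw [Algebra.smul_def, ResidueField.algebraMap_eq, (residue_eq_zero_iff r).2 hr, zero_mul]
  exact hφy ((Submodule.mem_bot R).1 (htriv ▸ map_mem_ideal_smul_top k hy))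

variable {P : ℕ → Type u} [∀ i, AddCommGroup (P i)] [∀ i, Module A (P i)]
  [∀ i, Module R (P i)] [∀ i, IsScalarTower R A (P i)] {J : Ideal A}
  {d : ∀ i, P (i + 1) →ₗ[A] P i}

lemma pureAlong_of_lt_maximalIdeal [∀ i, Module.Flat R (P i)] {i : ℕ} (hdd : d i ∘ₗ d (i + 1) = 0)
    (hJ : (maximalIdeal R).map (algebraMap R A) ≤ J.jacobson) {p : Ideal R} [p.IsPrime]
    (hp : p < maximalIdeal R) (hnoeth : NoetherianQuotientHomology J d i p)
    (hlt : ∀ I, p < I → PureAlong ((d i).restrictScalars R)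
      (LinearMap.range ((d (i + 1)).restrictScalars R)) I) :
    PureAlong ((d i).restrictScalars R) (LinearMap.range ((d (i + 1)).restrictScalars R)) p := by
  obtain ⟨x, hx, hxp⟩ := SetLike.exists_of_lt hp
  have hpx : p < p ⊔ Ideal.span {x} :=
    left_lt_sup.2 fun h ↦ hxp (h (Ideal.mem_span_singleton_self x))
  refine fun y hy ↦ ?_
  have hle := hnoeth.le_of_le_smul_sup (hJ (Ideal.mem_map_of_mem _ hx)) fun y hy ↦ ?_
  · obtain ⟨_, ⟨u, rfl⟩, v, hv, rfl⟩ := Submodule.mem_sup.1 (hle (mem_idealMul.2 hy))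
    exact Submodule.add_mem_sup ⟨u, rfl⟩ (mem_idealMul.1 hv)
  · obtain ⟨_, ⟨u, rfl⟩, w, hw, rfl⟩ := Submodule.mem_sup.1
      (hlt _ hpx (mem_idealMul.1 (idealMul_mono hpx.le hy)))
    obtain ⟨a, ha, z, rfl⟩ := exists_eq_add_algebraMap_smul (A := A) (mem_idealMul.2 hw)
    have hdu : d i (d (i + 1) u) = 0 := LinearMap.congr_fun hdd u
    have hxz : algebraMap R A x • d i z ∈ idealMul A p (P i) := by
      rw [← map_smul, ← Submodule.add_mem_iff_right _ (map_mem_idealMul (d i) ha), ← map_add]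
      simpa [hdu] using hy
    have hz : d i z ∈ idealMul A p (P i) := by
      rw [mem_idealMul, algebraMap_smul] at hxz
      exact mem_idealMul.2 (mem_prime_smul_top_of_smul_mem p hxp hxz)
    rw [add_comm a, add_left_comm]
    exact Submodule.add_mem_sup (Submodule.smul_mem_smul (Ideal.mem_span_singleton_self _) hz)
      (Submodule.add_mem_sup ⟨u, rfl⟩ ha)

lemma pureAlong_of_homExact_residueField [IsNoetherianRing R] [∀ i, Module.Flat R (P i)]
    (hJ : (maximalIdeal R).map (algebraMap R A) ≤ J.jacobson)
    (hdd : ∀ i, d i ∘ₗ d (i + 1) = 0) (hP₁ : Subsingleton (P 1))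
    (hP : ∀ i, IsNoetherianSupportedOn J (LinearMap.ker (d i)) (LinearMap.range (d (i + 1))))
    {s : ℕ} (hex : HomExact ((d (s + 1)).restrictScalars R) ((d s).restrictScalars R)
      (ResidueField R)) (I : Ideal R) :
    PureAlong ((d s).restrictScalars R) (LinearMap.range ((d (s + 1)).restrictScalars R)) I := by
  refine pureAlong_of_forall_isPrime ?_ (fun p hp hlt ↦ ?_) I
  · exact LinearMap.range_le_ker_iff.2 (LinearMap.ext fun u ↦ LinearMap.congr_fun (hdd s) u)
  · obtain rfl | hpm := (le_maximalIdeal hp.ne_top).eq_or_lt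
    · exact hex.pureAlong_maximalIdeal
    · exact pureAlong_of_lt_maximalIdeal (hdd s) hJ hpm
        (noetherianQuotientHomology hdd hP₁ hP s p) hlt

theorem exists_homExact_of_homExact_residueField [IsNoetherianRing R]
    [∀ i, Module.Projective R (P i)]
    (hJ : (maximalIdeal R).map (algebraMap R A) ≤ J.jacobson)
    (hdd : ∀ i, d i ∘ₗ d (i + 1) = 0) (hP₁ : Subsingleton (P 1))
    (hP : ∀ i, IsNoetherianSupportedOn J (LinearMap.ker (d i)) (LinearMap.range (d (i + 1))))
    {s : ℕ} (hex : HomExact ((d (s + 1)).restrictScalars R) ((d s).restrictScalars R)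
      (ResidueField R)) (hacyc : ∀ i, s ≤ i → Function.Exact (d (i + 1)) (d i)) :
    ∃ D : ℕ, ∀ j, D ≤ j → ∀ (N : Type u) [AddCommGroup N] [Module R N],
      HomExact ((d (j + 1)).restrictScalars R) ((d j).restrictScalars R) N := by
  obtain ⟨D, hD⟩ : ∃ D : ℕ, ringKrullDim R < D := by
    obtain ⟨D, hD⟩ := ENat.ne_top_iff_exists.1 (Ideal.height_ne_top
      (maximalIdeal.isMaximal R).ne_top)
    refine ⟨D + 1, ?_⟩
    rw [← maximalIdeal_height_eq_ringKrullDim, ← hD]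
    exact_mod_cast D.lt_succ_self
  refine ⟨s + D, fun j hj N _ _ ↦ ?_⟩
  obtain ⟨k, rfl⟩ := Nat.exists_eq_add_of_le (le_of_add_le_left hj)
  have hflat := flat_quotient_range_of_pureAlong (f := (d s).restrictScalars R)
    (LinearMap.range_le_ker_iff.2 (LinearMap.ext fun u ↦ LinearMap.congr_fun (hdd s) u))
    (pureAlong_of_homExact_residueField hJ hdd hP₁ hP hex)
  exact homExact_of_flat_quotient_range (P := fun i ↦ P (s + i))
    (d := fun i ↦ (d (s + i)).restrictScalars R) (fun i ↦ hacyc (s + i) (by omega)) hflat hD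
    (by omega) N

end ResidueField

section HomExactLongExact

variable {R : Type*} [CommRing R] {P₃ P₂ P₁ P₀ N N₁ N₂ N₃ : Type*}
  [AddCommGroup P₃] [Module R P₃] [AddCommGroup P₂] [Module R P₂] [AddCommGroup P₁] [Module R P₁]
  [AddCommGroup P₀] [Module R P₀] [AddCommGroup N] [Module R N] [AddCommGroup N₁] [Module R N₁]
  [AddCommGroup N₂] [Module R N₂] [AddCommGroup N₃] [Module R N₃]

lemma HomExact.of_retract {f₁ : P₂ →ₗ[R] P₁} {f₀ : P₁ →ₗ[R] P₀} (h₁ : HomExact f₁ f₀ N₁)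
    (i : N₂ →ₗ[R] N₁) (p : N₁ →ₗ[R] N₂) (hpi : p ∘ₗ i = LinearMap.id) : HomExact f₁ f₀ N₂ := by
  intro h hh
  obtain ⟨k, hk⟩ := h₁ (i ∘ₗ h) (by rw [LinearMap.comp_assoc, hh, LinearMap.comp_zero])
  exact ⟨p ∘ₗ k, by rw [LinearMap.comp_assoc, hk, ← LinearMap.comp_assoc, hpi, LinearMap.id_comp]⟩

lemma HomExact.of_shortExact {f₂ : P₃ →ₗ[R] P₂} {f₁ : P₂ →ₗ[R] P₁} {f₀ : P₁ →ₗ[R] P₀}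
    [Module.Projective R P₁] (hf : f₁ ∘ₗ f₂ = 0) {i : N₁ →ₗ[R] N₂} {p : N₂ →ₗ[R] N₃}
    (hi : Function.Injective i) (hp : Function.Surjective p) (hip : Function.Exact i p)
    (h₂ : HomExact f₁ f₀ N₂) (h₁ : HomExact f₂ f₁ N₁) : HomExact f₁ f₀ N₃ := by
  intro h hh
  obtain ⟨h', rfl⟩ := Module.projective_lifting_property p h hp
  have hrange (x) : (h' ∘ₗ f₁) x ∈ LinearMap.range i := (hip _).1 (LinearMap.congr_fun hh x)
  let e := LinearEquiv.ofInjective i hi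
  let c : P₂ →ₗ[R] N₁ := e.symm ∘ₗ (h' ∘ₗ f₁).codRestrict _ hrange
  have hc : i ∘ₗ c = h' ∘ₗ f₁ :=
    LinearMap.ext fun x ↦ congrArg Subtype.val (e.apply_symm_apply ⟨_, hrange x⟩)
  obtain ⟨k, hk⟩ := h₁ c <| (LinearMap.cancel_left hi).1 <| by
    rw [← LinearMap.comp_assoc, hc, LinearMap.comp_assoc, hf, LinearMap.comp_zero,
      LinearMap.comp_zero]
  obtain ⟨l, hl⟩ := h₂ (h' - i ∘ₗ k) (by
    rw [LinearMap.sub_comp, LinearMap.comp_assoc, hk, hc, sub_self])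
  exact ⟨p ∘ₗ l, by
    rw [LinearMap.comp_assoc, hl, LinearMap.comp_sub, ← LinearMap.comp_assoc,
      hip.linearMap_comp_eq_zero, LinearMap.zero_comp, sub_zero]⟩

open scoped Pointwise in
lemma HomExact.quotSMulTop {B : Type*} [CommRing B] [Algebra R B] [Module B N]
    [IsScalarTower R B N] {r : B} (hr : IsSMulRegular N r) {f₂ : P₃ →ₗ[R] P₂} {f₁ : P₂ →ₗ[R] P₁}
    {f₀ : P₁ →ₗ[R] P₀} [Module.Projective R P₁] (hf : f₁ ∘ₗ f₂ = 0) (h₂ : HomExact f₁ f₀ N)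
    (h₁ : HomExact f₂ f₁ N) : HomExact f₁ f₀ (QuotSMulTop r N) := by
  let i : N →ₗ[R] N := (LinearMap.lsmul B N r).restrictScalars R
  let p : N →ₗ[R] QuotSMulTop r N := (r • (⊤ : Submodule B N)).mkQ.restrictScalars R
  have hp : Function.Surjective p := Submodule.mkQ_surjective (r • (⊤ : Submodule B N))
  have hip : Function.Exact i p := LinearMap.exact_lsmul_mkQ_smul_top N r
  exact HomExact.of_shortExact (i := i) hf hr hp hip h₂ h₁

lemma HomExact.quotient_ofList {B : Type*} [CommRing B] [Algebra R B] {P : ℕ → Type*}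
    [∀ i, AddCommGroup (P i)] [∀ i, Module R (P i)] [∀ i, Module.Projective R (P i)]
    {d : ∀ i, P (i + 1) →ₗ[R] P i} (hdd : ∀ i, d i ∘ₗ d (i + 1) = 0) {rs : List B} {N : Type*}
    [AddCommGroup N] [Module B N] [Module R N] [IsScalarTower R B N]
    (hrs : RingTheory.Sequence.IsWeaklyRegular N rs) {s : ℕ}
    (h : ∀ j ≤ rs.length, HomExact (d (s + j + 1)) (d (s + j)) N) :
    HomExact (d (s + 1)) (d s) (N ⧸ (Ideal.ofList rs • ⊤ : Submodule B N)) := by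
  induction rs generalizing N s with
  | nil =>
    have hbot : (Ideal.ofList ([] : List B) • ⊤ : Submodule B N) = ⊥ := by
      rw [Ideal.ofList_nil, Submodule.bot_smul]
    let e := Submodule.quotEquivOfEqBot _ hbot
    exact HomExact.of_retract (h 0 le_rfl) (e.restrictScalars R).toLinearMap
      (e.symm.restrictScalars R).toLinearMap (LinearMap.ext e.symm_apply_apply)
  | cons r rs ih =>
    rw [RingTheory.Sequence.isWeaklyRegular_cons_iff] at hrs
    have hquot (j) (hj : j ≤ rs.length) :
        HomExact (d (s + j + 1)) (d (s + j)) (QuotSMulTop r N) := by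
      have hj₁ : HomExact (d (s + j + 1)) (d (s + j)) N := h j (Nat.le_succ_of_le hj)
      have hj₂ : HomExact (d (s + j + 1 + 1)) (d (s + j + 1)) N := h (j + 1) (Nat.succ_le_succ hj)
      exact HomExact.quotSMulTop hrs.1 (hdd (s + j + 1)) hj₁ hj₂
    let e := Submodule.quotOfListConsSMulTopEquivQuotSMulTopInner N r rs
    exact (ih hrs.2 hquot).of_retract (e.restrictScalars R).toLinearMap
      (e.symm.restrictScalars R).toLinearMap (LinearMap.ext e.symm_apply_apply)

end HomExactLongExact

section ResidueRetract

lemma exists_notMem_pow_sup {R : Type*} [CommRing R] [IsNoetherianRing R] [IsLocalRing R]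
    {I : Ideal R} {z : R} (hz : z ∉ I) : ∃ n, z ∉ maximalIdeal R ^ n ⊔ I := by
  by_contra! hcon
  refine hz (Ideal.Quotient.eq_zero_iff_mem.1 <|
    IsHausdorff.haus (I := maximalIdeal R) inferInstance (Ideal.Quotient.mk I z) fun n ↦ ?_)
  rw [SModEq.zero]
  obtain ⟨a, ha, b, hb, hab⟩ := Submodule.mem_sup.1 (hcon n)
  rw [← hab, map_add, Ideal.Quotient.eq_zero_iff_mem.2 hb, add_zero, ← mul_one a, map_mul]
  exact Submodule.smul_mem_smul ha (Submodule.mem_top (x := (1 : R ⧸ I)))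

/- The class of `z` spans a copy of the residue field of `R` inside `B ⧸ I` which is not contained
in `𝔪_R (B ⧸ I)`, hence splits off. -/
lemma HomExact.residueField_of_quotient {R B : Type u} [CommRing R] [IsLocalRing R] [CommRing B]
    [IsLocalRing B] [Algebra R B] {P₂ P₁ P₀ : Type*} [AddCommGroup P₂] [Module R P₂]
    [AddCommGroup P₁] [Module R P₁] [AddCommGroup P₀] [Module R P₀] {f₁ : P₂ →ₗ[R] P₁}
    {f₀ : P₁ →ₗ[R] P₀} {I : Ideal B} {z : B} {n : ℕ}
    (hRz : ∀ x ∈ maximalIdeal R, algebraMap R B x * z ∈ I)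
    (hRB : (maximalIdeal R).map (algebraMap R B) ≤ maximalIdeal B ^ n)
    (hz : z ∉ maximalIdeal B ^ n ⊔ I) (h : HomExact f₁ f₀ (B ⧸ I)) :
    HomExact f₁ f₀ (ResidueField R) := by
  let ι : ResidueField R →ₗ[R] B ⧸ I :=
    Submodule.liftQ (maximalIdeal R) (LinearMap.toSpanSingleton R (B ⧸ I) (Ideal.Quotient.mk I z))
      fun x hx ↦ by
        rw [LinearMap.mem_ker, LinearMap.toSpanSingleton_apply, Algebra.smul_def]
        exact Ideal.Quotient.eq_zero_iff_mem.2 (hRz x hx)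
  have hsmul : (maximalIdeal R • ⊤ : Submodule R (B ⧸ I)) ≤
      ((maximalIdeal B ^ n).map (Ideal.Quotient.mk I)).restrictScalars R := by
    refine Submodule.smul_le.2 fun r hr y _ ↦ ?_
    rw [Algebra.smul_def]
    exact Ideal.mul_mem_right _ _ (Ideal.mem_map_of_mem _ (hRB (Ideal.mem_map_of_mem _ hr)))
  have hzm : Ideal.Quotient.mk I z ∉ (maximalIdeal R • ⊤ : Submodule R (B ⧸ I)) := by
    refine fun hmem ↦ hz ?_
    have := Ideal.mem_comap.2 (hsmul hmem)
    rwa [Ideal.comap_map_of_surjective' _ Ideal.Quotient.mk_surjective, Ideal.mk_ker] at this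
  obtain ⟨g, -, hg⟩ := exists_linearMap_residueField_ne_zero le_rfl hzm
  set c := g (Ideal.Quotient.mk I z)
  obtain ⟨c', hc'⟩ := residue_surjective c⁻¹
  refine h.of_retract ι (c' • g) (LinearMap.ext fun x ↦ ?_)
  obtain ⟨r, rfl⟩ := residue_surjective x
  have hιr : ι (residue R r) = r • Ideal.Quotient.mk I z := rfl
  rw [LinearMap.comp_apply, hιr, map_smul, LinearMap.smul_apply, Algebra.smul_def, Algebra.smul_def,
    ResidueField.algebraMap_eq, hc', inv_mul_cancel₀ hg, mul_one, LinearMap.id_apply]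

end ResidueRetract

section Depth

variable {R : Type u} [CommRing R]

lemma subsingleton_ext_obj_iff {X : ModuleCat.{u} R} (Q : ProjectiveResolution X)
    (Y : ModuleCat.{u} R) (n : ℕ) :
    Subsingleton (((Ext R (ModuleCat.{u} R) n).obj (Opposite.op X)).obj Y) ↔
      ∀ f : Q.complex.X n ⟶ Y, Q.complex.d (n + 1) n ≫ f = 0 →
        ∃ g : Q.complex.X (n - 1) ⟶ Y, Q.complex.d n (n - 1) ≫ g = f := by
  rw [← ModuleCat.isZero_iff_subsingleton, (Q.isoExt n Y).isZero_iff,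
    ← HomologicalComplex.exactAt_iff_isZero_homology,
    HomologicalComplex.exactAt_iff' _ (n - 1) n (n + 1) (by cases n <;> simp) (by simp),
    ShortComplex.moduleCat_exact_iff]
  rfl

lemma subsingleton_abelianExt_iff {C : Type*} [Category* C] [Abelian C] [HasExt C] {X : C}
    (Q : ProjectiveResolution X) (Y : C) (n : ℕ) :
    Subsingleton (Abelian.Ext X Y n) ↔
      ∀ f : Q.complex.X n ⟶ Y, Q.complex.d (n + 1) n ≫ f = 0 →
        ∃ g : Q.complex.X (n - 1) ⟶ Y, Q.complex.d n (n - 1) ≫ g = f := by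
  cases n with
  | zero =>
    have hd : Q.complex.d 0 0 = 0 := HomologicalComplex.shape _ _ _ (by simp)
    simp only [Abelian.Ext.addEquiv₀.subsingleton_congr, hd, zero_comp, exists_const]
    change Subsingleton (((ChainComplex.single₀ C).obj X).X 0 ⟶ Y) ↔ _
    refine ⟨fun _ f hf ↦ ?_, fun h ↦ subsingleton_of_forall_eq 0 fun f ↦ ?_⟩
    · rw [← Q.exact₀.g_desc f hf]
      exact (comp_zero.symm.trans (congrArg _ (Subsingleton.elim _ _)))
    · rw [← cancel_epi (Q.π.f 0), comp_zero]
      refine (h _ ?_).symm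
      rw [zero_add, ProjectiveResolution.complex_d_comp_π_f_zero_assoc, zero_comp]
  | succ n =>
    refine ⟨fun _ f hf ↦ (Q.extMk_eq_zero_iff f _ rfl hf n rfl).1 (Subsingleton.elim _ _),
      fun h ↦ subsingleton_of_forall_eq 0 fun α ↦ ?_⟩
    obtain ⟨f, hf, rfl⟩ := Q.extMk_surjective α _ rfl
    exact (Q.extMk_eq_zero_iff f _ rfl hf n rfl).2 (h f hf)

lemma subsingleton_ext_obj_iff_abelianExt (X Y : ModuleCat.{u} R) (n : ℕ) :
    Subsingleton (((Ext R (ModuleCat.{u} R) n).obj (Opposite.op X)).obj Y) ↔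
      Subsingleton (Abelian.Ext X Y n) := by
  rw [subsingleton_ext_obj_iff (projectiveResolution X),
    subsingleton_abelianExt_iff (projectiveResolution X)]

variable [IsLocalRing R] [IsNoetherianRing R]

lemma exists_isRegular_length_eq_iff (n : ℕ) :
    (∃ rs : List R, rs.length = n ∧ (∀ r ∈ rs, r ∈ maximalIdeal R) ∧
      RingTheory.Sequence.IsRegular R rs) ↔
      ∀ i < n, Subsingleton (((Ext R (ModuleCat.{u} R) i).obj
        (Opposite.op (ModuleCat.of R (ResidueField R)))).obj (ModuleCat.of R R)) := by
  have hsupp : Module.support R (ModuleCat.of R (ResidueField R)) =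
      PrimeSpectrum.zeroLocus (maximalIdeal R : Set R) := by
    have := Module.support_eq_zeroLocus (R := R) (M := R ⧸ maximalIdeal R)
    rwa [Ideal.annihilator_quotient] at this
  have hlt : maximalIdeal R • (⊤ : Submodule R (ModuleCat.of R R)) < ⊤ := by
    simpa using (Ideal.IsPrime.ne_top inferInstance).lt_top
  simp only [subsingleton_ext_obj_iff_abelianExt]
  refine ⟨?_, ModuleCat.exists_isRegular_of_exists_subsingleton_ext _ n _ hlt _ hsupp⟩
  rintro ⟨rs, rfl, hrs, hreg⟩
  exact ModuleCat.subsingleton_ext_of_exists_isRegular _ _ hsupp.le _ hlt rs hrs hreg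

lemma length_le_ringKrullDim_of_isRegular {rs : List R}
    (hrs : RingTheory.Sequence.IsRegular R rs) : (rs.length : WithBot ℕ∞) ≤ ringKrullDim R := by
  have : Nontrivial (R ⧸ Ideal.ofList rs) := by
    rw [Ideal.Quotient.nontrivial_iff]
    simpa using hrs.top_ne_smul.symm
  rw [← ringKrullDim_add_length_eq_ringKrullDim_of_isRegular rs hrs]
  exact le_add_of_nonneg_left ringKrullDim_nonneg_of_nontrivial

lemma exists_isRegular_length_eq_iff_le_depthNat (n : ℕ) :
    (∃ rs : List R, rs.length = n ∧ (∀ r ∈ rs, r ∈ maximalIdeal R) ∧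
      RingTheory.Sequence.IsRegular R rs) ↔ n ≤ depthNat R := by
  have hne : {n : ℕ | ¬ Subsingleton (((Ext R (ModuleCat.{u} R) n).obj
      (Opposite.op (ModuleCat.of R (ResidueField R)))).obj (ModuleCat.of R R))}.Nonempty := by
    by_contra hempty
    obtain ⟨m, hm⟩ := ENat.ne_top_iff_exists.1 <|
      (maximalIdeal R).height_ne_top (Ideal.IsPrime.ne_top inferInstance)
    obtain ⟨rs, hlen, -, hrs⟩ := (exists_isRegular_length_eq_iff (R := R) (m + 1)).2
      fun i _ ↦ not_not.1 fun hi ↦ hempty ⟨i, hi⟩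
    have hle := length_le_ringKrullDim_of_isRegular hrs
    rw [hlen, ← maximalIdeal_height_eq_ringKrullDim, ← hm] at hle
    norm_cast at hle
    omega
  rw [exists_isRegular_length_eq_iff]
  exact ⟨fun h ↦ le_of_not_gt fun hlt ↦ Nat.sInf_mem hne (h _ hlt),
    fun h i hi ↦ not_not.1 (Nat.notMem_of_lt_sInf (hi.trans_le h))⟩

/- Otherwise some element of `maximalIdeal R` would extend a longest regular sequence. -/
lemma exists_isRegular_socle : ∃ rs : List R, rs.length = depthNat R ∧
    RingTheory.Sequence.IsRegular R rs ∧
    ∃ z ∉ Ideal.ofList rs, ∀ x ∈ maximalIdeal R, x * z ∈ Ideal.ofList rs := by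
  obtain ⟨rs, hlen, hrs, hreg⟩ := (exists_isRegular_length_eq_iff_le_depthNat (R := R) _).2 le_rfl
  refine ⟨rs, hlen, hreg, ?_⟩
  by_contra! hcon
  have hhom : Subsingleton (ResidueField R →ₗ[R] R ⧸ (Ideal.ofList rs • ⊤ : Ideal R)) := by
    refine subsingleton_of_forall_eq 0 fun g ↦ LinearMap.ext fun w ↦ ?_
    obtain ⟨w, rfl⟩ := residue_surjective w
    obtain ⟨z, hz⟩ := Submodule.Quotient.mk_surjective _ (g (residue R w))
    rw [LinearMap.zero_apply, ← hz, Submodule.Quotient.mk_eq_zero, smul_eq_mul, Ideal.mul_top]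
    by_contra hzI
    obtain ⟨x, hx, hxz⟩ := hcon z hzI
    refine hxz ?_
    have hxw : x • residue R w = 0 := by
      rw [Algebra.smul_def, ResidueField.algebraMap_eq, (residue_eq_zero_iff x).2 hx, zero_mul]
    rw [← Ideal.mul_top (Ideal.ofList rs), ← smul_eq_mul, ← smul_eq_mul x,
      ← Submodule.Quotient.mk_eq_zero, Submodule.Quotient.mk_smul, hz, ← map_smul, hxw, map_zero]
  obtain ⟨x, hx, hxreg⟩ := IsSMulRegular.subsingleton_linearMap_iff.1 hhom
  have hxm : x ∈ maximalIdeal R := Ideal.annihilator_quotient (I := maximalIdeal R) ▸ hx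
  have hmem : ∀ r ∈ rs ++ [x], r ∈ maximalIdeal R := by
    simpa [or_imp, forall_and] using ⟨hrs, hxm⟩
  have hreg' : RingTheory.Sequence.IsRegular R (rs ++ [x]) := by
    rw [isRegular_iff_isWeaklyRegular_of_subset_maximalIdeal hmem,
      RingTheory.Sequence.isWeaklyRegular_append_iff,
      RingTheory.Sequence.isWeaklyRegular_singleton_iff]
    exact ⟨hreg.toIsWeaklyRegular, hxreg⟩
  have := (exists_isRegular_length_eq_iff_le_depthNat _).1 ⟨_, rfl, hmem, hreg'⟩
  rw [List.length_append, hlen] at this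
  simp at this

end Depth

section DerivedHom

open CochainComplex HomComplex

variable {C : Type*} [Category* C] [Abelian C]

lemma subsingleton_derivedCategory_hom_iff [HasDerivedCategory C] {K M : CochainComplex C ℤ}
    [K.IsKProjective] (f : K ⟶ M) [QuasiIso f] (N : C) {i p' p p'' : ℤ} (hp : p + i = 0)
    (hp' : p' + 1 = p) (hp'' : p + 1 = p'') :
    Subsingleton (DerivedCategory.Q.obj M ⟶
        ((DerivedCategory.singleFunctor C 0).obj N)⟦i⟧) ↔
      ∀ h : K.X p ⟶ N, K.d p' p ≫ h = 0 → ∃ k : K.X p'' ⟶ N, K.d p p'' ≫ k = h := by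
  let L := (CochainComplex.singleFunctor C 0).obj N
  let eM : DerivedCategory.Q.obj M ≅
      DerivedCategory.Qh.obj ((HomotopyCategory.quotient _ _).obj K) :=
    (asIso (DerivedCategory.Q.map f)).symm ≪≫ (DerivedCategory.quotientCompQhIso C).symm.app K
  let eN : ((DerivedCategory.singleFunctor C 0).obj N)⟦i⟧ ≅
      DerivedCategory.Qh.obj ((HomotopyCategory.quotient _ _).obj (L⟦i⟧)) :=
    (CategoryTheory.shiftFunctor _ i).mapIso ((DerivedCategory.singleFunctorIsoCompQ C 0).app N) ≪≫
      (DerivedCategory.Q.commShiftIso i).symm.app L ≪≫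
        (DerivedCategory.quotientCompQhIso C).symm.app (L⟦i⟧)
  let e : CohomologyClass K L i ≃ _ := Equiv.ofBijective _
    ((CochainComplex.IsKProjective.Qh_map_bijective K
      ((HomotopyCategory.quotient _ _).obj (L⟦i⟧))).comp (CohomologyClass.toHom_bijective K L i))
  have hzero (h : K.X p ⟶ N) (hh : K.d p' p ≫ h = 0) :
      CohomologyClass.mk (Cocycle.toSingleMk (q := 0) (n := i) h hp p' hp' hh) = 0 ↔
        ∃ k : K.X p'' ⟶ N, K.d p p'' ≫ k = h := by
    rw [CohomologyClass.mk_eq_zero_iff,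
      Cocycle.toSingleMk_mem_coboundaries_iff _ _ _ _ _ p'' hp'']
  rw [((Iso.homCongr eM eN).trans e.symm).subsingleton_congr]
  refine ⟨fun _ h hh ↦ (hzero h hh).1 (Subsingleton.elim _ _),
    fun H ↦ subsingleton_of_forall_eq 0 fun x ↦ ?_⟩
  obtain ⟨x, rfl⟩ := x.mk_surjective
  obtain ⟨h, hh, rfl⟩ := Cocycle.toSingleMk_surjective x p hp p' hp'
  exact (hzero h hh).2 (H h hh)

lemma exists_quasiIso_projective_of_isStrictlyLE [EnoughProjectives C] (T : CochainComplex C ℤ)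
    (b : ℤ) [T.IsStrictlyLE b] : ∃ (K : CochainComplex C ℤ) (f : K ⟶ T),
      QuasiIso f ∧ (∀ n, Projective (K.X n)) ∧ K.IsStrictlyLE b := by
  let L := (opEquivalence C).functor.obj (.op T)
  have : L.IsStrictlyGE (-b) := by
    rw [isStrictlyGE_iff]
    intro i hi
    exact (T.isZero_of_isStrictlyLE b _ (by change b < -i; lia)).op
  obtain ⟨I, ι, hι, hI, hIb⟩ :=
    CochainComplex.Plus.modelCategoryQuillen.exists_quasiIso_injective L (-b)
  let K := ((opEquivalence C).inverse.obj I).unop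
  let g : K ⟶ ((opEquivalence C).inverse.obj L).unop := ((opEquivalence C).inverse.map ι).unop
  have hg : QuasiIso g := by
    rw [quasiIso_iff]
    intro n
    rw [quasiIsoAt_iff' g (n - 1) n (n + 1) (by simp) (by simp)]
    have := (quasiIsoAt_iff' ι (-(n + 1)) (-n) (-(n - 1)) (by simp; lia) (by simp; lia)).1
      inferInstance
    exact ShortComplex.quasiIso_unopMap ((HomologicalComplex.shortComplexFunctor' Cᵒᵖ
      (ComplexShape.up ℤ) (-(n + 1)) (-n) (-(n - 1))).map ι)
  have : IsIso ((opEquivalence C).unit.app (.op T)).unop := inferInstance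
  refine ⟨K, g ≫ ((opEquivalence C).unit.app (.op T)).unop, inferInstance, fun n ↦ ?_, ?_⟩
  · have := hI (-n)
    exact inferInstanceAs (Projective (I.X (-n)).unop)
  · rw [isStrictlyLE_iff]
    intro i hi
    exact (I.isZero_of_isStrictlyGE (-b) (-i) (by lia)).unop

lemma exists_quasiIso_projective_of_isLE [EnoughProjectives C] (M : CochainComplex C ℤ) (b : ℤ)
    [M.IsLE b] : ∃ (K : CochainComplex C ℤ) (f : K ⟶ M),
      QuasiIso f ∧ (∀ n, Projective (K.X n)) ∧ K.IsStrictlyLE b := by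
  obtain ⟨K, f, hf, hK, hKb⟩ := exists_quasiIso_projective_of_isStrictlyLE (M.truncLE b) b
  exact ⟨K, f ≫ M.ιTruncLE b, inferInstance, hK, hKb⟩

end DerivedHom

section HomologySupport

variable {A : Type u} [CommRing A]

lemma isNoetherianSupportedOn_ker_range_of_shortComplex (T : ShortComplex (ModuleCat.{u} A))
    [IsNoetherian A T.homology] {J : Ideal A} (hJ : ∀ a ∈ J, ∀ y : T.homology, a • y = 0) :
    IsNoetherianSupportedOn J (LinearMap.ker T.g.hom) (LinearMap.range T.f.hom) := by
  let e : T.homology ≃ₗ[A] (LinearMap.ker T.g.hom ⧸ LinearMap.range T.moduleCatToCycles) :=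
    T.moduleCatHomologyIso.toLinearEquiv
  refine ⟨?_, fun a ha ↦ ⟨1, fun y hy ↦ ?_⟩⟩
  · let q : (LinearMap.ker T.g.hom ⧸ LinearMap.range T.moduleCatToCycles) →ₗ[A]
        T.X₂ ⧸ LinearMap.range T.f.hom :=
      Submodule.mapQ _ _ (LinearMap.ker T.g.hom).subtype (by rintro _ ⟨x, rfl⟩; exact ⟨x, rfl⟩)
    have hq : LinearMap.range q = (LinearMap.ker T.g.hom).map (LinearMap.range T.f.hom).mkQ := by
      rw [Submodule.range_mapQ, Submodule.range_subtype]
    have := isNoetherian_of_linearEquiv e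
    exact hq ▸ isNoetherian_range q
  · have hzero : a • (Submodule.Quotient.mk ⟨y, hy⟩ :
        LinearMap.ker T.g.hom ⧸ LinearMap.range T.moduleCatToCycles) = 0 := by
      rw [← e.apply_symm_apply (Submodule.Quotient.mk _), ← map_smul, hJ a ha, map_zero]
    rw [← Submodule.Quotient.mk_smul, Submodule.Quotient.mk_eq_zero] at hzero
    obtain ⟨x, hx⟩ := hzero
    exact ⟨x, by rw [pow_one]; exact congrArg Subtype.val hx⟩

lemma isNoetherianSupportedOn_ker_range_d (K : CochainComplex (ModuleCat.{u} A) ℤ) {p' p p'' : ℤ}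
    (hp' : p' + 1 = p) (hp'' : p + 1 = p'') [IsNoetherian A (K.homology p)] {J : Ideal A}
    (hJ : ∀ a ∈ J, ∀ y : K.homology p, a • y = 0) :
    IsNoetherianSupportedOn J (LinearMap.ker (K.d p p'').hom) (LinearMap.range (K.d p' p).hom) := by
  let e : K.homology p ≃ₗ[A] (K.sc' p' p p'').homology :=
    (K.homologyIsoSc' p' p p'' (by simp; lia) (by simp; lia)).toLinearEquiv
  have := isNoetherian_of_linearEquiv e
  refine isNoetherianSupportedOn_ker_range_of_shortComplex (K.sc' p' p p'') fun a ha y ↦ ?_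
  rw [← e.apply_symm_apply y, ← map_smul, hJ a ha, map_zero]

lemma exact_d_of_isZero_homology (K : CochainComplex (ModuleCat.{u} A) ℤ) {p' p p'' : ℤ}
    (hp' : p' + 1 = p) (hp'' : p + 1 = p'') (h : IsZero (K.homology p)) :
    Function.Exact (K.d p' p).hom (K.d p p'').hom := by
  rwa [← K.exactAt_iff_isZero_homology, K.exactAt_iff' p' p p'' (by simp; lia) (by simp; lia),
    ShortComplex.ShortExact.moduleCat_exact_iff_function_exact] at h

end HomologySupport

section RestrictScalars

variable {R A S : Type u} [CommRing R] [CommRing A] [CommRing S]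

lemma isNoetherian_restrictScalars {π : A →+* S} (hπ : Function.Surjective π)
    (H : ModuleCat.{u} S) [IsNoetherian S H] :
    IsNoetherian A ((ModuleCat.restrictScalars π).obj H) := by
  have : RingHomSurjective π := ⟨hπ⟩
  let f : (ModuleCat.restrictScalars π).obj H →ₛₗ[π] H :=
    { toFun := id, map_add' := fun _ _ ↦ rfl, map_smul' := fun _ _ ↦ rfl }
  exact (LinearMap.isNoetherian_iff_of_bijective f Function.bijective_id).2 inferInstance

open scoped ModuleCat.Algebra in
lemma moduleProjective_of_free [Algebra R A] [Module.Free R A] (X : ModuleCat.{u} A)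
    [Projective X] : Module.Projective R X := by
  have : Module.Projective A X := (IsProjective.iff_projective (R := A) X).2 inferInstance
  obtain ⟨s, hs⟩ := Module.projective_def'.1 this
  exact Module.Projective.of_split (s.restrictScalars R)
    ((Finsupp.linearCombination A (id : X → X)).restrictScalars R)
    (LinearMap.ext fun x ↦ LinearMap.congr_fun hs x)

end RestrictScalars

section HomExactAt

open scoped ModuleCat.Algebra

variable {A : Type u} [CommRing A]

/-- Exactness of the complex `Hom_R(K, N)` in cohomological degree `i`, for a cochain complex `K`
of modules over an `R`-algebra: the only term involved is `Hom_R(K.X (-i), N)`. -/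
def HomExactAt (R : Type*) [CommRing R] [Algebra R A] (K : CochainComplex (ModuleCat.{u} A) ℤ)
    (N : Type*) [AddCommGroup N] [Module R N] (i : ℤ) : Prop :=
  HomExact ((K.d (-i - 1) (-i)).hom.restrictScalars R) ((K.d (-i) (-i + 1)).hom.restrictScalars R) N

variable {R : Type u} [CommRing R] [Algebra R A] {K : CochainComplex (ModuleCat.{u} A) ℤ}

lemma homExactAt_iff {N : Type*} [AddCommGroup N] [Module R N] {i p' p p'' : ℤ} (hp : p + i = 0)
    (hp' : p' + 1 = p) (hp'' : p + 1 = p'') :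
    HomExactAt R K N i ↔
      HomExact ((K.d p' p).hom.restrictScalars R) ((K.d p p'').hom.restrictScalars R) N := by
  obtain rfl : p = -i := by lia
  obtain rfl : p' = -i - 1 := by lia
  subst hp''
  rfl

lemma subsingleton_hyperExt_iff_homExactAt [HasDerivedCategory (ModuleCat.{u} R)]
    [Module.Free R A] {M : CochainComplex (ModuleCat.{u} R) ℤ} (b : ℤ) [K.IsStrictlyLE b]
    [∀ n, Projective (K.X n)]
    (g : ((ModuleCat.restrictScalars (algebraMap R A)).mapHomologicalComplex _).obj K ⟶ M)
    [QuasiIso g] (N : ModuleCat.{u} R) (i : ℤ) :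
    Subsingleton (hyperExt R M N i) ↔ HomExactAt R K N i := by
  let KR : CochainComplex (ModuleCat.{u} R) ℤ :=
    ((ModuleCat.restrictScalars (algebraMap R A)).mapHomologicalComplex _).obj K
  have hproj (n) : Projective (KR.X n) :=
    (IsProjective.iff_projective (R := R) (KR.X n)).1 (moduleProjective_of_free (K.X n))
  have hle : KR.IsStrictlyLE b := by
    rw [CochainComplex.isStrictlyLE_iff]
    exact fun i hi ↦ (ModuleCat.restrictScalars (algebraMap R A)).map_isZero
      (K.isZero_of_isStrictlyLE b i hi)
  have := CochainComplex.isKProjective_of_projective KR b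
  rw [hyperExt, subsingleton_derivedCategory_hom_iff (K := KR) g N (p := -i) (p' := -i - 1)
    (p'' := -i + 1) (by lia) (by lia) (by lia)]
  constructor
  · intro H h hh
    obtain ⟨k, hk⟩ := H (ModuleCat.ofHom (X := KR.X (-i)) h) (ModuleCat.hom_ext hh)
    exact ⟨k.hom, congrArg ModuleCat.Hom.hom hk⟩
  · intro H h hh
    obtain ⟨k, hk⟩ := H h.hom (congrArg ModuleCat.Hom.hom hh)
    exact ⟨ModuleCat.ofHom (X := KR.X (-i + 1)) k, ModuleCat.hom_ext hk⟩

/-- The differential of `K` out of homological degree `i + j + 1`; the truncation of `K` at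
homological degree `i` thereby becomes a complex indexed by `ℕ`. -/
def homologicalD (K : CochainComplex (ModuleCat.{u} A) ℤ) (i : ℤ) (j : ℕ) :
    K.X (-(i + (j + 1 : ℕ))) →ₗ[A] K.X (-(i + j)) :=
  (K.d _ _).hom

lemma homologicalD_comp_homologicalD (i : ℤ) (j : ℕ) :
    homologicalD K i j ∘ₗ homologicalD K i (j + 1) = 0 :=
  congrArg ModuleCat.Hom.hom (K.d_comp_d _ _ _)

lemma homExactAt_iff_homExact_homologicalD {N : Type*} [AddCommGroup N] [Module R N] {i n : ℤ}
    {j : ℕ} (hn : n = i + j + 1) : HomExactAt R K N n ↔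
      HomExact ((homologicalD K i (j + 1)).restrictScalars R)
        ((homologicalD K i j).restrictScalars R) N :=
  homExactAt_iff (by lia) (by push_cast; lia) (by push_cast; lia)

/- Killing a maximal regular sequence of `B` costs one degree per element, and the quotient has the
residue field of `R` as a direct summand. -/
lemma homExactAt_residueField_of_homExactAt [IsLocalRing R] [Module.Free R A]
    [∀ n, Projective (K.X n)] {B : Type u} [CommRing B] [IsLocalRing B] [Algebra R B]
    {rs : List B} (hrs : RingTheory.Sequence.IsWeaklyRegular B rs) {z : B} {n : ℕ}
    (hsocle : ∀ x ∈ maximalIdeal B, x * z ∈ Ideal.ofList rs)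
    (hz : z ∉ maximalIdeal B ^ n ⊔ Ideal.ofList rs)
    (hRB : (maximalIdeal R).map (algebraMap R B) ≤ maximalIdeal B ^ n) {t : ℤ}
    (h : ∀ j : ℕ, j ≤ rs.length → HomExactAt R K B (t + j)) :
    HomExactAt R K (ResidueField R) t := by
  have hproj (j : ℕ) : Module.Projective R (K.X (-(t - 1 + j))) := moduleProjective_of_free _
  have htop : (Ideal.ofList rs • ⊤ : Submodule B B) = Ideal.ofList rs := by simp
  have hn : n ≠ 0 := by
    rintro rfl
    simp at hz
  have hlocal : (maximalIdeal R).map (algebraMap R B) ≤ maximalIdeal B :=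
    hRB.trans (Ideal.pow_le_self hn)
  have hquot := HomExact.quotient_ofList (R := R) (P := fun j ↦ K.X (-(t - 1 + j)))
    (d := fun j ↦ (homologicalD K (t - 1) j).restrictScalars R)
    (fun j ↦ LinearMap.ext fun x ↦
      LinearMap.congr_fun (homologicalD_comp_homologicalD (t - 1) j) x)
    hrs (s := 0) fun j hj ↦ by
      rw [zero_add]
      exact (homExactAt_iff_homExact_homologicalD (by lia)).1 (h j hj)
  exact (homExactAt_iff_homExact_homologicalD (by lia)).2 <|
    HomExact.residueField_of_quotient (z := z) (n := n)
      (fun x hx ↦ htop.symm ▸ hsocle _ (hlocal (Ideal.mem_map_of_mem _ hx))) hRB (htop.symm ▸ hz)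
      hquot

lemma exists_homExactAt_of_homExactAt_residueField [IsLocalRing R] [IsNoetherianRing R]
    [Module.Free R A] [∀ n, Projective (K.X n)] (b : ℤ) [K.IsStrictlyLE b] {J : Ideal A}
    (hJ : (maximalIdeal R).map (algebraMap R A) ≤ J.jacobson)
    [∀ i, IsNoetherian A (K.homology i)]
    (hJK : ∀ a ∈ J, ∀ i, ∀ y : K.homology i, a • y = 0) {t : ℤ}
    (hzero : ∀ i, t ≤ i → IsZero (K.homology (-i))) (ht : HomExactAt R K (ResidueField R) t) :
    ∃ D : ℤ, ∀ i, D < i → ∀ (N : Type u) [AddCommGroup N] [Module R N], HomExactAt R K N i := by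
  obtain ⟨i₀, hi₀t, hi₀b⟩ : ∃ i₀ : ℤ, i₀ ≤ t - 1 ∧ i₀ ≤ -b - 2 :=
    ⟨min (t - 1) (-b - 2), min_le_left _ _, min_le_right _ _⟩
  obtain ⟨s, rfl⟩ : ∃ s : ℕ, t = i₀ + s + 1 := ⟨(t - 1 - i₀).toNat, by lia⟩
  have hproj (j : ℕ) : Module.Projective R (K.X (-(i₀ + j))) := moduleProjective_of_free _
  have hP₁ : Subsingleton (K.X (-(i₀ + (1 : ℕ)))) :=
    ModuleCat.subsingleton_of_isZero (K.isZero_of_isStrictlyLE b _ (by lia))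
  obtain ⟨D, hD⟩ := exists_homExact_of_homExact_residueField (R := R)
    (P := fun j ↦ K.X (-(i₀ + j))) (d := homologicalD K i₀) hJ
    (homologicalD_comp_homologicalD i₀) hP₁
    (fun j ↦ isNoetherianSupportedOn_ker_range_d K (by push_cast; lia) (by push_cast; lia)
      fun a ha ↦ hJK a ha _)
    ((homExactAt_iff_homExact_homologicalD rfl).1 ht)
    (fun j hj ↦ exact_d_of_isZero_homology K (by push_cast; lia) (by push_cast; lia)
      (hzero _ (by lia)))
  refine ⟨i₀ + D, fun i hi N _ _ ↦ ?_⟩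
  obtain ⟨j, rfl⟩ : ∃ j : ℕ, i = i₀ + j + 1 := ⟨(i - i₀ - 1).toNat, by lia⟩
  exact (homExactAt_iff_homExact_homologicalD rfl).2 (hD j (by lia) N)

end HomExactAt

section ProjectiveModel

variable {R A S : Type u} [CommRing R] [CommRing A] [CommRing S] [Algebra R A]

lemma exists_quasiIso_projective_restrictScalars {π : A →+* S} {ρ : R →+* S}
    (hρ : ρ = π.comp (algebraMap R A)) (M : CochainComplex (ModuleCat.{u} S) ℤ) (b : ℤ)
    [M.IsLE b] : ∃ K : CochainComplex (ModuleCat.{u} A) ℤ,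
      (∀ n, Projective (K.X n)) ∧ K.IsStrictlyLE b ∧
      (∀ i, Nonempty (K.homology i ≅ (ModuleCat.restrictScalars π).obj (M.homology i))) ∧
      ∃ g : ((ModuleCat.restrictScalars (algebraMap R A)).mapHomologicalComplex _).obj K ⟶
        ((ModuleCat.restrictScalars ρ).mapHomologicalComplex _).obj M, QuasiIso g := by
  let M' : CochainComplex (ModuleCat.{u} A) ℤ :=
    ((ModuleCat.restrictScalars π).mapHomologicalComplex _).obj M
  let e (i) : M'.homology i ≅ (ModuleCat.restrictScalars π).obj (M.homology i) :=
    (M.sc i).mapHomologyIso (ModuleCat.restrictScalars π)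
  have hM' : M'.IsLE b := by
    rw [CochainComplex.isLE_iff]
    intro i hi
    rw [HomologicalComplex.exactAt_iff_isZero_homology]
    exact ((ModuleCat.restrictScalars π).map_isZero (M.isZero_of_isLE b i hi)).of_iso (e i)
  obtain ⟨K, f, hf, hK, hKb⟩ := exists_quasiIso_projective_of_isLE M' b
  let G : ModuleCat.{u} A ⥤ ModuleCat.{u} R := ModuleCat.restrictScalars (algebraMap R A)
  let eR := (NatIso.mapHomologicalComplex (ModuleCat.restrictScalarsComp' (algebraMap R A) π ρ hρ)
    (ComplexShape.up ℤ)).app M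
  let f' : (G.mapHomologicalComplex _).obj K ⟶ (G.mapHomologicalComplex _).obj M' :=
    (G.mapHomologicalComplex _).map f
  let h : (G.mapHomologicalComplex _).obj M' ⟶
      ((ModuleCat.restrictScalars ρ).mapHomologicalComplex _).obj M := eR.inv
  have hf' : QuasiIso f' := inferInstance
  have hh : IsIso h := inferInstanceAs (IsIso eR.inv)
  exact ⟨K, hK, hKb, fun i ↦ ⟨isoOfQuasiIsoAt f i ≪≫ e i⟩, f' ≫ h, quasiIso_comp f' h⟩

lemma smul_eq_zero_of_restrictScalars_equiv {π : A →+* S} {H : ModuleCat.{u} S} {L : Type*}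
    [AddCommGroup L] [Module A L] (e : L ≃ₗ[A] (ModuleCat.restrictScalars π).obj H) {a : A}
    (ha : π a = 0) (y : L) : a • y = 0 := by
  refine e.injective ?_
  rw [map_smul, map_zero]
  change π a • (show H from e y) = 0
  rw [ha, zero_smul]

end ProjectiveModel

lemma map_maximalIdeal_le_jacobson_bot {R S : Type*} [CommRing R] [CommRing S] [IsLocalRing R]
    [IsLocalRing S] (ρ : R →+* S) [IsLocalHom ρ] :
    (maximalIdeal R).map ρ ≤ Ideal.jacobson ⊥ := by
  rw [jacobson_eq_maximalIdeal ⊥ bot_ne_top]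
  exact ((local_hom_TFAE ρ).out 0 2).1 ‹_›

lemma exists_pow_map_le_pow {R : Type*} [CommRing R] {φ : R →+* R} {I : Ideal R}
    (hφ : ∃ n₀ : ℕ, ∀ n, n₀ ≤ n → ∀ x ∈ I, (φ ^ n) x ∈ I ^ 2) (N : ℕ) :
    ∃ n₀ : ℕ, ∀ n, n₀ ≤ n → I.map (φ ^ n) ≤ I ^ (N + 1) := by
  obtain ⟨n₀, hn₀⟩ := hφ
  have hmap (n) (hn : n₀ ≤ n) : I.map (φ ^ n) ≤ I ^ 2 := Ideal.map_le_iff_le_comap.2 (hn₀ n hn)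
  induction N with
  | zero => exact ⟨n₀, fun n hn ↦ (hmap n hn).trans (Ideal.pow_le_pow_right one_le_two)⟩
  | succ N ih =>
    obtain ⟨n₁, hn₁⟩ := ih
    refine ⟨n₀ + n₁, fun n hn ↦ ?_⟩
    obtain ⟨k, rfl⟩ := Nat.exists_eq_add_of_le (le_of_add_le_left hn)
    calc I.map (φ ^ (n₀ + k)) = (I.map (φ ^ k)).map (φ ^ n₀) := by
          rw [Ideal.map_map, pow_add]; rfl
      _ ≤ (I ^ (N + 1)).map (φ ^ n₀) := Ideal.map_mono (hn₁ k (by lia))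
      _ = (I.map (φ ^ n₀)) ^ (N + 1) := Ideal.map_pow _ _ _
      _ ≤ (I ^ 2) ^ (N + 1) := Ideal.pow_right_mono (hmap n₀ le_rfl) _
      _ ≤ I ^ (N + 1 + 1) := by rw [← pow_mul]; exact Ideal.pow_le_pow_right (by lia)

theorem finite_projective_dimension_of_ext_vanishing_general
    {R S B : Type u} [CommRing R] [CommRing S] [CommRing B] [IsNoetherianRing R]
    [IsNoetherianRing B] [IsLocalRing R] [IsLocalRing B] [HasDerivedCategory (ModuleCat.{u} R)]
    (ρ : R →+* S) (hρ : (maximalIdeal R).map ρ ≤ Ideal.jacobson ⊥)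
    (M : CochainComplex (ModuleCat.{u} S) ℤ) (b : ℤ) [M.IsLE b]
    [∀ i, IsNoetherian S (M.homology i)]
    (hext : ∀ n : ℕ, ∃ ψ : R →+* B, (maximalIdeal R).map ψ ≤ maximalIdeal B ^ n ∧ ∃ t : ℤ,
      (∀ i, t ≤ i → IsZero (M.homology (-i))) ∧ ∀ i, t ≤ i → i ≤ t + (depthNat B : ℤ) →
        Subsingleton (hyperExt R (((ModuleCat.restrictScalars ρ).mapHomologicalComplex _).obj M)
          ((ModuleCat.restrictScalars ψ).obj (ModuleCat.of B B)) i)) :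
    ∃ d : ℤ, ∀ (N : ModuleCat.{u} R) (i : ℤ), d < i → Subsingleton
      (hyperExt R (((ModuleCat.restrictScalars ρ).mapHomologicalComplex _).obj M) N i) := by
  let _ := ρ.toAlgebra
  let π : MvPolynomial S R →+* S := (MvPolynomial.aeval (R := R) (id : S → S)).toRingHom
  have hπ : Function.Surjective π := fun s ↦ ⟨.X s, MvPolynomial.aeval_X id s⟩
  have hπρ : ρ = π.comp (algebraMap R _) :=
    (MvPolynomial.aeval (R := R) (id : S → S)).comp_algebraMap.symm
  obtain ⟨K, hK, hKb, hKM, g, hg⟩ := exists_quasiIso_projective_restrictScalars hπρ M b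
  obtain ⟨rs, hlen, hrs, z, hz, hsocle⟩ := exists_isRegular_socle (R := B)
  obtain ⟨n, hn⟩ := exists_notMem_pow_sup hz
  obtain ⟨ψ, hψ, t, hzero, ht⟩ := hext n
  let _ := ψ.toAlgebra
  have hres : HomExactAt R K (ResidueField R) t :=
    homExactAt_residueField_of_homExactAt hrs.toIsWeaklyRegular hsocle hn hψ fun j hj ↦
      (subsingleton_hyperExt_iff_homExactAt b g _ _).1 (ht _ (by lia) (by lia))
  have hnoeth (i) : IsNoetherian (MvPolynomial S R) (K.homology i) :=
    have := isNoetherian_restrictScalars hπ (M.homology i)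
    isNoetherian_of_linearEquiv (hKM i).some.toLinearEquiv.symm
  obtain ⟨D, hD⟩ := exists_homExactAt_of_homExactAt_residueField b (J := RingHom.ker π)
    (by rwa [RingHom.ker, ← Ideal.comap_jacobson_of_surjective hπ, ← Ideal.map_le_iff_le_comap,
      Ideal.map_map, ← hπρ])
    (fun a ha i ↦ smul_eq_zero_of_restrictScalars_equiv (hKM i).some.toLinearEquiv ha)
    (fun i hi ↦ ((ModuleCat.restrictScalars π).map_isZero (hzero i hi)).of_iso (hKM _).some) hres
  exact ⟨D, fun N i hi ↦ (subsingleton_hyperExt_iff_homExactAt b g N i).2 (hD i hi N)⟩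

/-- Let `R → S` be a local homomorphism of Noetherian local rings, `M` a
homologically finite `S`-complex, and `φ : R → R` a contracting endomorphism.  If for
infinitely many `n` there is `t_n > sup M` with `Ext^i_R(M, ^nR) = 0` for
`t_n ≤ i ≤ t_n + depth R`, then `pd_R M < ∞`. -/
theorem finite_projective_dimension_of_ext_vanishing
    {R S : Type u} [CommRing R] [CommRing S] [IsNoetherianRing R] [IsNoetherianRing S]
    [IsLocalRing R] [IsLocalRing S]
    [HasDerivedCategory (ModuleCat.{u} R)]
    (ρ : R →+* S) [IsLocalHom ρ]
    (φ : R →+* R) [IsLocalHom φ]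
    (hcontr : ∃ N₀ : ℕ, ∀ n : ℕ, N₀ ≤ n → ∀ x ∈ maximalIdeal R,
      (φ ^ n) x ∈ (maximalIdeal R) ^ 2)
    (M : CochainComplex (ModuleCat.{u} S) ℤ)
    (hbdd : ∃ a b : ℤ, ∀ i : ℤ, (i < a ∨ b < i) → IsZero (M.homology i))
    (hfin : ∀ i : ℤ, Module.Finite S ↥(M.homology i))
    (hext : {n : ℕ | ∃ t : ℤ,
      (∀ i : ℤ, t ≤ i → IsZero (M.homology (-i))) ∧
      (∀ i : ℤ, t ≤ i → i ≤ t + (depthNat R : ℤ) →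
        (letI : Module R R := Module.compHom R (φ ^ n);
          Subsingleton (hyperExt R
            (((ModuleCat.restrictScalars ρ : ModuleCat.{u} S ⥤ ModuleCat.{u} R).mapHomologicalComplex
              (ComplexShape.up ℤ)).obj M)
            (ModuleCat.of R R) i)))}.Infinite) :
    ∃ d : ℤ, ∀ (N : ModuleCat.{u} R) (i : ℤ), d < i →
      Subsingleton (hyperExt R
        (((ModuleCat.restrictScalars ρ : ModuleCat.{u} S ⥤ ModuleCat.{u} R).mapHomologicalComplex
          (ComplexShape.up ℤ)).obj M) N i) := by
  obtain ⟨_, b, hab⟩ := hbdd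
  have hM : M.IsLE b := by
    simpa only [CochainComplex.isLE_iff, HomologicalComplex.exactAt_iff_isZero_homology] using
      fun i hi ↦ hab i (.inr hi)
  refine finite_projective_dimension_of_ext_vanishing_general (B := R) ρ
    (map_maximalIdeal_le_jacobson_bot ρ) M b fun N ↦ ?_
  obtain ⟨n₀, hn₀⟩ := exists_pow_map_le_pow hcontr N
  obtain ⟨n, hn, hlt⟩ := hext.exists_gt n₀
  exact ⟨φ ^ n, (hn₀ n hlt.le).trans (Ideal.pow_le_pow_right N.le_succ), hn⟩
end
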